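/- Let d ≥ 1, 2 ≤ p < ∞, and k = 2d(1/2 − 1/p). There exists a constant C > 0 such that for every Schwartz function f on ℝ^d: ‖(1−Δ)^{−k/2} f‖_{L^p(ℝ^d)} ≤ C·‖V_g f‖_{L^p(ℝ^{2d})}. -/

import Mathlib

open MeasureTheory Complex Real
open scoped ENNReal RealInnerProductSpace

noncomputable section

abbrev E (d : ℕ) : Type := EuclideanSpace ℝ (Fin d)

/-- Phase space `ℝ^{2d} = ℝ^d × ℝ^d`. -/
abbrev P (d : ℕ) : Type := E d × E d

/-- The complex conjugate of the wave packet `π(z)g`, Gaussian window `g(y)=exp(-|y|²/2)`. -/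
def pkbar (d : ℕ) (z : P d) (y : E d) : ℂ :=
  Complex.exp (-Complex.I * (⟪y, z.2⟫ : ℂ)) * Real.exp (-‖y - z.1‖ ^ 2 / 2)

/-- The short-time Fourier transform with Gaussian window. -/
def stft (d : ℕ) (u : E d → ℂ) (z : P d) : ℂ := ∫ y, u y * pkbar d z y

/-- The Fourier transform `ℱu(ξ) = ∫ exp(-i x·ξ) u(x) dx`. -/
def FT (d : ℕ) (u : E d → ℂ) (ξ : E d) : ℂ :=
  ∫ x, Complex.exp (-Complex.I * (⟪x, ξ⟫ : ℂ)) * u x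

/-- The Bessel potential `(1-Δ)^{k/2} u = ℱ⁻¹((1+|ξ|²)^{k/2} ℱu)`. -/
def bessel (d : ℕ) (k : ℝ) (u : E d → ℂ) (x : E d) : ℂ :=
  (((2 * π) ^ d : ℝ) : ℂ)⁻¹ *
    ∫ ξ, Complex.exp (Complex.I * (⟪x, ξ⟫ : ℂ)) * (((1 + ‖ξ‖ ^ 2) ^ (k / 2) : ℝ) : ℂ) *
      FT d u ξ

/-
Applying Plancherel to a truncation of `w` that depends on the level, and then Hardy's inequality,
gives `‖𝓕 w‖_p^p ≲ ∫ |w(ξ)|^p |ξ|^{d(p-2)} dξ` for `2 ≤ p`. Put `m(ξ) = (1+|2πξ|²)^{-k/2}`, apply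
this to the convolutions of `m 𝓕 f` with modulated Gaussians and integrate over the modulation: the
`p`-th power of `‖(1-Δ)^{-k/2} f‖_p` is bounded by that of the short-time transform of `m 𝓕 f`, with
weight `|ξ|^{d(p-2)}` at window position `ξ`. There, multiplication by `m` convolves the short-time
transform of `f` at frequency `ξ` with a kernel whose `L¹` norm is `≲ m(ξ)`, as one sees by writing
`m` as a mixture of Gaussians. Young's inequality therefore gains `m(ξ)^p`, which absorbs the weight
because `kp = d(p-2)`.
-/

open scoped FourierTransform Convolution

local notation "dim" => Module.finrank ℝ

theorem memLp_two_of_enorm_le {X F : Type*} [MeasurableSpace X] {μ : Measure X}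
    [NormedAddCommGroup F] {w : X → F} (hw : Integrable w μ) {M : ℝ≥0∞} (hM : M ≠ ⊤)
    (h : ∀ x, ‖w x‖ₑ ≤ M) : MemLp w 2 μ := by
  rw [memLp_two_iff_integrable_sq_norm hw.1]
  simp only [sq]
  refine hw.norm.bdd_mul (c := M.toReal) hw.1.norm (.of_forall fun x => ?_)
  rw [norm_norm, ← toReal_enorm]
  exact ENNReal.toReal_mono hM (h x)

theorem integral_norm_rpow_eq_toReal_lintegral {α F : Type*} [MeasurableSpace α]
    [NormedAddCommGroup F] {μ : Measure α} {u : α → F} (hu : AEStronglyMeasurable u μ) {p : ℝ}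
    (hp : 0 ≤ p) : ∫ x, ‖u x‖ ^ p ∂μ = (∫⁻ x, ‖u x‖ₑ ^ p ∂μ).toReal := by
  rw [integral_eq_lintegral_of_nonneg_ae (.of_forall fun x => by positivity)
    (hu.norm.aemeasurable.pow_const p).aestronglyMeasurable]
  simp only [← ofReal_norm, ENNReal.ofReal_rpow_of_nonneg (norm_nonneg _) hp]

section Plancherel

open SchwartzMap

variable {V F : Type*} [NormedAddCommGroup V] [InnerProductSpace ℝ V] [FiniteDimensional ℝ V]
  [MeasurableSpace V] [BorelSpace V] [NormedAddCommGroup F]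

theorem continuous_fourier [NormedSpace ℂ F] {w : V → F} (hw : Integrable w) :
    Continuous (𝓕 w) :=
  VectorFourier.fourierIntegral_continuous Real.continuous_fourierChar (by exact continuous_inner)
    hw

theorem enorm_fourier_le_lintegral [NormedSpace ℂ F] (w : V → F) (y : V) :
    ‖𝓕 w y‖ₑ ≤ ∫⁻ ξ, ‖w ξ‖ₑ := by
  rw [Real.fourier_eq]
  refine (enorm_integral_le_lintegral_enorm _).trans (lintegral_mono fun ξ => le_of_eq ?_)
  rw [← ofReal_norm, Circle.norm_smul, ofReal_norm]

theorem integral_fourier_smul_eq_integral_smul_fourier [NormedSpace ℂ F] [CompleteSpace F]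
    {φ : V → ℂ} {w : V → F} (hφ : Integrable φ) (hw : Integrable w) :
    ∫ x, 𝓕 φ x • w x = ∫ x, φ x • 𝓕 w x := by
  have h := VectorFourier.integral_fourierIntegral_smul_eq_flip (L := innerₗ V) (μ := volume)
    (ν := volume) Real.continuous_fourierChar (by exact continuous_inner) hφ hw
  rwa [flip_innerₗ] at h

variable [InnerProductSpace ℂ F] [CompleteSpace F]

theorem fourier_ae_eq_fourier_toLp {w : V → F} (h₁ : Integrable w) (h₂ : MemLp w 2) :
    (𝓕 w : V → F) =ᵐ[volume] (𝓕 (h₂.toLp w) : Lp (α := V) F 2 volume) := by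
  refine ae_eq_of_integral_contDiff_smul_eq (continuous_fourier h₁).locallyIntegrable
    ((Lp.memLp _).locallyIntegrable one_le_two) fun φ hφ hφc => ?_
  have hψc : HasCompactSupport fun x => (φ x : ℂ) := hφc.comp_left (g := Complex.ofReal) rfl
  let ψ : 𝓢(V, ℂ) := hψc.toSchwartzMap (Complex.ofRealCLM.contDiff.comp hφ)
  have hψ : ∀ (x : V) (u : F), φ x • u = ψ x • u := fun x u => (Complex.coe_smul (φ x) u).symm
  have hT := congrArg (fun T : 𝓢'(V, F) => T ψ)
    (Lp.fourier_toTemperedDistribution_eq (h₂.toLp w))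
  simp only [TemperedDistribution.fourier_apply, Lp.toTemperedDistribution_apply] at hT
  calc ∫ x, φ x • 𝓕 w x = ∫ x, ψ x • 𝓕 w x := by simp only [hψ]
    _ = ∫ x, 𝓕 ψ x • w x := (integral_fourier_smul_eq_integral_smul_fourier ψ.integrable h₁).symm
    _ = ∫ x, 𝓕 ψ x • h₂.toLp w x := integral_congr_ae <| by
        filter_upwards [h₂.coeFn_toLp] with x hx
        rw [hx]
    _ = _ := by simp only [hT, hψ]

theorem eLpNorm_fourier_eq {w : V → F} (h₁ : Integrable w) (h₂ : MemLp w 2) :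
    eLpNorm (𝓕 w) 2 volume = eLpNorm w 2 volume := by
  rw [eLpNorm_congr_ae (fourier_ae_eq_fourier_toLp h₁ h₂), ← Lp.enorm_def,
    ← eLpNorm_congr_ae h₂.coeFn_toLp, ← Lp.enorm_def, ← ofReal_norm, ← ofReal_norm,
    Lp.norm_fourier_eq]

theorem lintegral_enorm_fourier_sq {w : V → F} (h₁ : Integrable w) (h₂ : MemLp w 2) :
    ∫⁻ y, ‖𝓕 w y‖ₑ ^ (2 : ℝ) = ∫⁻ ξ, ‖w ξ‖ₑ ^ (2 : ℝ) := by
  have h := eLpNorm_fourier_eq h₁ h₂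
  simp only [eLpNorm_eq_lintegral_rpow_enorm_toReal two_ne_zero ENNReal.ofNat_ne_top] at h
  exact ENNReal.rpow_left_injective (by norm_num) h

end Plancherel

section Distribution

theorem measure_setOf_measure_le_le {X : Type*} [MeasurableSpace X] (ν : Measure X) (g : X → ℝ)
    (c : ℝ≥0∞) : ν {x | ν {y | g y ≤ g x} ≤ c} ≤ c := by
  set s := {x | ν {y | g y ≤ g x} ≤ c}
  by_cases hmax : ∃ x ∈ s, ∀ y ∈ s, g y ≤ g x
  · obtain ⟨x, hx, hxy⟩ := hmax
    exact (measure_mono hxy).trans hx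
  -- If the supremum of `g` over `s` is not attained, countably many sublevel sets exhaust `s`.
  push Not at hmax
  let ι := {q : ℚ // ∃ x ∈ s, (q : ℝ) ≤ g x}
  have hcover : s ⊆ ⋃ q : ι, {y | g y ≤ ((q : ℚ) : ℝ)} := by
    intro x hx
    obtain ⟨y, hy, hxy⟩ := hmax x hx
    obtain ⟨q, hxq, hqy⟩ := exists_rat_btwn hxy
    exact Set.mem_iUnion.2 ⟨⟨q, y, hy, hqy.le⟩, hxq.le⟩
  have hmono : Monotone fun q : ι => {y | g y ≤ ((q : ℚ) : ℝ)} :=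
    fun q q' h y (hy : g y ≤ _) => hy.trans (Rat.cast_le.2 h)
  refine (measure_mono hcover).trans ?_
  rw [hmono.directed_le.measure_iUnion]
  refine iSup_le fun ⟨_, _, hx, hqx⟩ => ?_
  exact (measure_mono fun y (hy : g y ≤ _) => hy.trans hqx).trans hx

theorem lintegral_rpow_le_of_measure_lt_le {X Y : Type*} [MeasurableSpace X] [MeasurableSpace Y]
    {μ : Measure X} {ν : Measure Y} {f : X → ℝ≥0∞} {g : Y → ℝ≥0∞} {A : ℝ≥0∞} {p q : ℝ}
    (hp : 0 < p) (hqp : q < p) (hf : AEMeasurable f μ) (hf_top : ∀ x, f x ≠ ⊤)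
    (hg : AEMeasurable g ν) (hg_top : ∀ y, g y ≠ ⊤)
    (h : ∀ t : ℝ, 0 < t → μ {x | ENNReal.ofReal t < f x} ≤
      A * ENNReal.ofReal t ^ (-q) * ν {y | ENNReal.ofReal t < g y}) :
    ∫⁻ x, f x ^ p ∂μ ≤ A * ENNReal.ofReal (p / (p - q)) * ∫⁻ y, g y ^ (p - q) ∂ν := by
  have hs : 0 < p - q := sub_pos.2 hqp
  have hfp := lintegral_rpow_eq_lintegral_meas_lt_mul μ (.of_forall fun x => ENNReal.toReal_nonneg)
    hf.ennreal_toReal hp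
  have hgs := lintegral_rpow_eq_lintegral_meas_lt_mul ν (.of_forall fun y => ENNReal.toReal_nonneg)
    hg.ennreal_toReal hs
  simp only [← ENNReal.ofReal_rpow_of_nonneg ENNReal.toReal_nonneg, hp.le, hs.le, hf_top, hg_top,
    ENNReal.ofReal_toReal, ne_eq, not_false_eq_true] at hfp hgs
  rw [hfp, hgs]
  calc ENNReal.ofReal p *
        ∫⁻ t in Set.Ioi 0, μ {x | t < (f x).toReal} * ENNReal.ofReal (t ^ (p - 1))
      ≤ ENNReal.ofReal p * ∫⁻ t in Set.Ioi 0,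
          A * (ν {y | t < (g y).toReal} * ENNReal.ofReal (t ^ (p - q - 1))) := by
        refine mul_le_mul_right (setLIntegral_mono' measurableSet_Ioi fun t (ht : 0 < t) => ?_) _
        have hpow : ENNReal.ofReal (t ^ (p - q - 1)) =
            ENNReal.ofReal t ^ (-q) * ENNReal.ofReal (t ^ (p - 1)) := by
          rw [ENNReal.ofReal_rpow_of_pos ht, ← ENNReal.ofReal_mul (by positivity),
            ← Real.rpow_add ht]
          ring_nf
        simp only [← ENNReal.ofReal_lt_iff_lt_toReal ht.le, hf_top, hg_top, ne_eq,
          not_false_eq_true, hpow]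
        exact (mul_le_mul_left (h t ht) _).trans_eq (by ring)
    _ = _ := by
        have hconst : ENNReal.ofReal p = ENNReal.ofReal (p / (p - q)) * ENNReal.ofReal (p - q) := by
          rw [← ENNReal.ofReal_mul (by positivity), div_mul_cancel₀ _ hs.ne']
        have hanti : Antitone fun t => ν {y | t < (g y).toReal} :=
          fun t t' htt' => measure_mono fun y hy => htt'.trans_lt hy
        have hmeas : Measurable fun t =>
            ν {y | t < (g y).toReal} * ENNReal.ofReal (t ^ (p - q - 1)) :=
          hanti.measurable.mul (by fun_prop)
        rw [lintegral_const_mul _ hmeas, hconst]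
        ring

end Distribution

section RadialMass

variable {V : Type*} [NormedAddCommGroup V] [MeasureSpace V]

/-- The mass `∫_{|η| ≤ |ξ|} φ(η) dη` of a weight `φ` in the ball bounded by the sphere through
`ξ`. -/
def radialMass (φ : V → ℝ≥0∞) (ξ : V) : ℝ≥0∞ := ∫⁻ η in Metric.closedBall 0 ‖ξ‖, φ η

variable [OpensMeasurableSpace V]

theorem measurable_radialMass (φ : V → ℝ≥0∞) : Measurable (radialMass φ) := by
  have hmono : Monotone fun r : ℝ => ∫⁻ η in Metric.closedBall (0 : V) r, φ η :=
    fun r s h => lintegral_mono_set (Metric.closedBall_subset_closedBall h)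
  exact hmono.measurable.comp measurable_norm

theorem setLIntegral_radialMass_le (φ : V → ℝ≥0∞) (c : ℝ≥0∞) :
    ∫⁻ η in {ξ | radialMass φ ξ ≤ c}, φ η ≤ c := by
  have hball (ξ : V) : volume.withDensity φ {η | ‖η‖ ≤ ‖ξ‖} = radialMass φ ξ := by
    rw [withDensity_apply _ (measurableSet_le measurable_norm measurable_const), radialMass]
    simp only [Metric.closedBall, dist_zero_right]
  have h := measure_setOf_measure_le_le (volume.withDensity φ) (fun ξ : V => ‖ξ‖) c
  simp only [hball] at h
  rwa [withDensity_apply _ (measurableSet_le (measurable_radialMass φ) measurable_const)] at h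

end RadialMass

section Paley

variable {V F : Type*} [NormedAddCommGroup V] [InnerProductSpace ℝ V] [FiniteDimensional ℝ V]
  [MeasurableSpace V] [BorelSpace V] [NormedAddCommGroup F] [InnerProductSpace ℂ F]

theorem enorm_fourier_indicator_radialMass_le (w : V → F) (c : ℝ≥0∞) (y : V) :
    ‖𝓕 ({ξ | radialMass (‖w ·‖ₑ) ξ ≤ c}.indicator w) y‖ₑ ≤ c := by
  refine (enorm_fourier_le_lintegral _ y).trans ?_
  simp_rw [enorm_indicator_eq_indicator_enorm]
  rw [lintegral_indicator (measurableSet_le (measurable_radialMass _) measurable_const)]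
  exact setLIntegral_radialMass_le _ c

theorem fourier_add_apply {w v : V → F} (hw : Integrable w) (hv : Integrable v) (y : V) :
    𝓕 (w + v) y = 𝓕 w y + 𝓕 v y :=
  congrFun (VectorFourier.fourierIntegral_add Real.continuous_fourierChar
    (by exact continuous_inner) hw hv) y

variable [CompleteSpace F]

theorem measure_le_enorm_fourier_le {w : V → F} (h₁ : Integrable w) (h₂ : MemLp w 2)
    {c : ℝ≥0∞} (hc₀ : c ≠ 0) (hc : c ≠ ⊤) :
    volume {y | c ≤ ‖𝓕 w y‖ₑ} ≤ (∫⁻ ξ, ‖w ξ‖ₑ ^ (2 : ℝ)) / c ^ (2 : ℝ) := by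
  have hset : {y | c ≤ ‖𝓕 w y‖ₑ} = {y | c ^ (2 : ℝ) ≤ ‖𝓕 w y‖ₑ ^ (2 : ℝ)} := by
    simp only [ENNReal.rpow_le_rpow_iff two_pos]
  rw [hset, ← lintegral_enorm_fourier_sq h₁ h₂]
  exact meas_ge_le_lintegral_div
    ((continuous_fourier h₁).enorm.measurable.pow_const _).aemeasurable
    (by simpa using hc₀) (ENNReal.rpow_ne_top_of_nonneg zero_le_two hc)

theorem measure_lt_enorm_fourier_le {w : V → F} (h₁ : Integrable w) (h₂ : MemLp w 2)
    {c : ℝ≥0∞} (hc₀ : c ≠ 0) (hc : c ≠ ⊤) :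
    volume {y | c < ‖𝓕 w y‖ₑ} ≤
      4 * c ^ (-2 : ℝ) * ∫⁻ ξ in {ξ | c < 2 * radialMass (‖w ·‖ₑ) ξ}, ‖w ξ‖ₑ ^ (2 : ℝ) := by
  set inner := {ξ | radialMass (‖w ·‖ₑ) ξ ≤ c / 2}
  have hinner : MeasurableSet inner := measurableSet_le (measurable_radialMass _) measurable_const
  have hcompl : {ξ | c < 2 * radialMass (‖w ·‖ₑ) ξ} = innerᶜ := by
    ext ξ
    simp [inner, ENNReal.div_lt_iff, mul_comm]
  have hsub : {y | c < ‖𝓕 w y‖ₑ} ⊆ {y | c / 2 ≤ ‖𝓕 (innerᶜ.indicator w) y‖ₑ} := by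
    intro y (hy : c < _)
    have hsplit : 𝓕 w y = 𝓕 (inner.indicator w) y + 𝓕 (innerᶜ.indicator w) y := by
      rw [← fourier_add_apply (h₁.indicator hinner) (h₁.indicator hinner.compl),
        Set.indicator_self_add_compl]
    have hle : c / 2 + c / 2 ≤ c / 2 + ‖𝓕 (innerᶜ.indicator w) y‖ₑ := by
      rw [ENNReal.add_halves]
      refine hy.le.trans (hsplit ▸ (enorm_add_le _ _).trans ?_)
      exact add_le_add_left (enorm_fourier_indicator_radialMass_le w _ y) _
    exact (ENNReal.add_le_add_iff_left (ENNReal.div_ne_top hc two_ne_zero)).1 hle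
  have hcoef : ((c / 2) ^ (2 : ℝ))⁻¹ = 4 * c ^ (-2 : ℝ) := by
    rw [ENNReal.div_rpow_of_nonneg _ _ zero_le_two, ENNReal.inv_div (by simp) (by simp),
      ENNReal.div_eq_inv_mul, ENNReal.rpow_neg, mul_comm]
    norm_num
  have henorm (ξ : V) : ‖innerᶜ.indicator w ξ‖ₑ ^ (2 : ℝ) =
      innerᶜ.indicator (fun ξ => ‖w ξ‖ₑ ^ (2 : ℝ)) ξ := by
    by_cases hξ : ξ ∈ innerᶜ <;> simp [hξ]
  calc volume {y | c < ‖𝓕 w y‖ₑ}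
      ≤ (∫⁻ ξ, ‖innerᶜ.indicator w ξ‖ₑ ^ (2 : ℝ)) / (c / 2) ^ (2 : ℝ) :=
        (measure_mono hsub).trans (measure_le_enorm_fourier_le (h₁.indicator hinner.compl)
          (h₂.indicator hinner.compl) (ENNReal.div_ne_zero.2 ⟨hc₀, ENNReal.ofNat_ne_top⟩)
          (ENNReal.div_ne_top hc two_ne_zero))
    _ = _ := by
        simp_rw [henorm]
        rw [lintegral_indicator hinner.compl, hcompl, ENNReal.div_eq_inv_mul, hcoef]

theorem lintegral_enorm_fourier_rpow_le {p : ℝ} (hp : 2 < p) {w : V → F} (h₁ : Integrable w)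
    (h₂ : MemLp w 2) :
    ∫⁻ y, ‖𝓕 w y‖ₑ ^ p ≤ 4 * ENNReal.ofReal (p / (p - 2)) *
      ∫⁻ ξ, ‖w ξ‖ₑ ^ (2 : ℝ) * (2 * radialMass (‖w ·‖ₑ) ξ) ^ (p - 2) := by
  have hmass : Measurable fun ξ => 2 * radialMass (‖w ·‖ₑ) ξ :=
    (measurable_radialMass _).const_mul 2
  have hsq : AEMeasurable fun ξ => ‖w ξ‖ₑ ^ (2 : ℝ) := h₁.1.enorm.pow_const _
  have hmass_top (ξ : V) : 2 * radialMass (‖w ·‖ₑ) ξ ≠ ⊤ :=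
    ENNReal.mul_ne_top ENNReal.ofNat_ne_top ((setLIntegral_le_lintegral _ _).trans_lt h₁.2).ne
  have h := lintegral_rpow_le_of_measure_lt_le (by linarith) hp
    (continuous_fourier h₁).enorm.measurable.aemeasurable (fun _ => enorm_ne_top)
    hmass.aemeasurable hmass_top fun t ht => by
      rw [withDensity_apply _ (measurableSet_lt measurable_const hmass)]
      exact measure_lt_enorm_fourier_le h₁ h₂ (by simpa using ht) ENNReal.ofReal_ne_top
  rwa [lintegral_withDensity_eq_lintegral_mul₀ hsq (hmass.pow_const _).aemeasurable] at h

end Paley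

section Holder

theorem lintegral_mul_rpow_le {X : Type*} [MeasurableSpace X] {μ : Measure X} {p : ℝ} (hp : 1 < p)
    {f g : X → ℝ≥0∞} (hf : AEMeasurable f μ) (hg : AEMeasurable g μ) :
    (∫⁻ x, f x * g x ∂μ) ^ p ≤
      (∫⁻ x, f x ^ p ∂μ) * (∫⁻ x, g x ^ (p / (p - 1)) ∂μ) ^ (p - 1) := by
  have hp₀ : 0 < p := by linarith
  have hp₁ : 0 < p - 1 := by linarith
  refine (ENNReal.rpow_le_rpow (ENNReal.lintegral_mul_le_Lp_mul_Lq μ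
    (Real.HolderConjugate.conjExponent hp) hf hg) hp₀.le).trans_eq ?_
  rw [Real.conjExponent, ENNReal.mul_rpow_of_nonneg _ _ hp₀.le, ← ENNReal.rpow_mul,
    ← ENNReal.rpow_mul, one_div_mul_cancel hp₀.ne', ENNReal.rpow_one]
  congr 2
  field_simp

theorem lintegral_sq_mul_rpow_le {X : Type*} [MeasurableSpace X] {μ : Measure X} {p : ℝ}
    (hp : 2 ≤ p) {f g v : X → ℝ≥0∞} (hf : AEMeasurable f μ) (hg : AEMeasurable g μ)
    (hv : AEMeasurable v μ) (hv₀ : ∀ᵐ x ∂μ, v x ≠ 0) (hv_top : ∀ᵐ x ∂μ, v x ≠ ⊤) :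
    ∫⁻ x, f x ^ (2 : ℝ) * g x ^ (p - 2) ∂μ ≤
      (∫⁻ x, f x ^ p * v x ^ (p - 2) ∂μ) ^ (2 / p) *
        (∫⁻ x, g x ^ p * v x ^ (-2 : ℝ) ∂μ) ^ ((p - 2) / p) := by
  have hp₀ : 0 < p := by linarith
  have hα : 0 ≤ 2 / p := by positivity
  have hβ : 0 ≤ (p - 2) / p := div_nonneg (by linarith) hp₀.le
  refine (lintegral_congr_ae ?_).trans_le (ENNReal.lintegral_mul_norm_pow_le
    ((hf.pow_const p).mul (hv.pow_const (p - 2))) ((hg.pow_const p).mul (hv.pow_const (-2)))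
    hα hβ (by field_simp; ring))
  filter_upwards [hv₀, hv_top] with x hx₀ hx_top
  have hcancel : v x ^ ((p - 2) * (2 / p)) * v x ^ (-2 * ((p - 2) / p)) = 1 := by
    rw [← ENNReal.rpow_add _ _ hx₀ hx_top]
    ring_nf
    exact ENNReal.rpow_zero
  simp only [Pi.mul_apply, ENNReal.mul_rpow_of_nonneg _ _ hα, ENNReal.mul_rpow_of_nonneg _ _ hβ,
    ← ENNReal.rpow_mul, mul_div_cancel₀ _ hp₀.ne']
  rw [mul_mul_mul_comm, hcancel, mul_one]

theorem lintegral_lintegral_mul_sub_rpow_le {G : Type*} [AddCommGroup G] [MeasurableSpace G]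
    [MeasurableAdd₂ G] [MeasurableNeg G] {μ : Measure G} [μ.IsAddLeftInvariant] [μ.IsNegInvariant]
    [SFinite μ] {p : ℝ} (hp : 1 < p) {a b : G → ℝ≥0∞} (ha : Measurable a) (hb : Measurable b) :
    ∫⁻ x, (∫⁻ y, a y * b (x - y) ∂μ) ^ p ∂μ ≤ (∫⁻ y, b y ∂μ) ^ p * ∫⁻ y, a y ^ p ∂μ := by
  have hp₀ : 0 < p := by linarith
  have hp₁ : 0 < p - 1 := by linarith
  have holder (x : G) : (∫⁻ y, a y * b (x - y) ∂μ) ^ p ≤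
      (∫⁻ y, a y ^ p * b (x - y) ∂μ) * (∫⁻ y, b y ∂μ) ^ (p - 1) := by
    have hbx : Measurable fun y => b (x - y) := by fun_prop
    have h := lintegral_mul_rpow_le (μ := μ) hp
      (ha.mul (hbx.pow_const (1 / p))).aemeasurable (hbx.pow_const ((p - 1) / p)).aemeasurable
    have hroot (y : G) : a y * b (x - y) ^ (1 / p) * b (x - y) ^ ((p - 1) / p) =
        a y * b (x - y) := by
      rw [mul_assoc, ← ENNReal.rpow_add_of_nonneg _ _ (by positivity) (by positivity), ← add_div,
        add_sub_cancel, div_self hp₀.ne', ENNReal.rpow_one]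
    simp only [Pi.mul_apply, hroot, ENNReal.mul_rpow_of_nonneg _ _ hp₀.le, ← ENNReal.rpow_mul,
      one_div_mul_cancel hp₀.ne', div_mul_div_cancel₀ hp₀.ne', div_self hp₁.ne',
      ENNReal.rpow_one] at h
    rwa [lintegral_sub_left_eq_self b x] at h
  have hab : Measurable fun z : G × G => a z.2 ^ p * b (z.1 - z.2) := by fun_prop
  calc ∫⁻ x, (∫⁻ y, a y * b (x - y) ∂μ) ^ p ∂μ
      ≤ ∫⁻ x, (∫⁻ y, a y ^ p * b (x - y) ∂μ) * (∫⁻ y, b y ∂μ) ^ (p - 1) ∂μ := lintegral_mono holder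
    _ = (∫⁻ y, a y ^ p * ∫⁻ x, b x ∂μ ∂μ) * (∫⁻ y, b y ∂μ) ^ (p - 1) := by
        rw [lintegral_mul_const _ hab.lintegral_prod_right', lintegral_lintegral_swap
          hab.aemeasurable]
        congr 2 with y
        dsimp only
        rw [lintegral_const_mul _ (by fun_prop : Measurable fun x => b (x - y)),
          lintegral_sub_right_eq_self b y]
    _ = (∫⁻ y, b y ∂μ) ^ p * ∫⁻ y, a y ^ p ∂μ := by
        rw [lintegral_mul_const _ (ha.pow_const _), mul_assoc, mul_comm]
        congr 1
        nth_rw 1 [← ENNReal.rpow_one (∫⁻ y, b y ∂μ)]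
        rw [← ENNReal.rpow_add_of_nonneg _ _ zero_le_one hp₁.le, add_sub_cancel]

end Holder

section PowerWeights

open Metric
open scoped Pointwise

variable {V : Type*} [NormedAddCommGroup V]

theorem enorm_rpow_mul_enorm_rpow {x : V} (hx : x ≠ 0) (s t : ℝ) :
    ‖x‖ₑ ^ s * ‖x‖ₑ ^ t = ‖x‖ₑ ^ (s + t) :=
  (ENNReal.rpow_add _ _ (enorm_ne_zero.2 hx) enorm_ne_top).symm

section AddHaar

variable [NormedSpace ℝ V] [FiniteDimensional ℝ V] [MeasurableSpace V] [BorelSpace V]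
  (μ : Measure V) [μ.IsAddHaarMeasure]

theorem lintegral_comp_smul (f : V → ℝ≥0∞) {r : ℝ} (hr : r ≠ 0) :
    ∫⁻ x, f (r • x) ∂μ = ENNReal.ofReal |(r ^ dim V)⁻¹| * ∫⁻ x, f x ∂μ := by
  rw [← smul_eq_mul, ← lintegral_smul_measure, ← Measure.map_addHaar_smul μ hr,
    (measurableEmbedding_const_smul₀ hr).lintegral_map]

theorem setLIntegral_smul_enorm_rpow {r : ℝ} (hr : 0 < r) {S : Set V} (hS : MeasurableSet S)
    (s : ℝ) :
    ∫⁻ x in r • S, ‖x‖ₑ ^ s ∂μ =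
      (∫⁻ x in S, ‖x‖ₑ ^ s ∂μ) * ENNReal.ofReal r ^ (dim V + s) := by
  have hr₀ : ENNReal.ofReal r ≠ 0 := by simpa using hr
  have hind (x : V) : S.indicator (fun x => ‖x‖ₑ ^ s) x =
      ENNReal.ofReal r ^ (-s) * (r • S).indicator (fun x => ‖x‖ₑ ^ s) (r • x) := by
    by_cases hx : x ∈ S
    · rw [Set.indicator_of_mem hx, Set.indicator_of_mem (Set.smul_mem_smul_set hx), enorm_smul,
        ENNReal.mul_rpow_of_ne_top enorm_ne_top enorm_ne_top, Real.enorm_eq_ofReal hr.le,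
        ← mul_assoc, ← ENNReal.rpow_add _ _ hr₀ ENNReal.ofReal_ne_top,
        neg_add_cancel, ENNReal.rpow_zero, one_mul]
    · rw [Set.indicator_of_notMem hx, Set.indicator_of_notMem
        (by rwa [Set.smul_mem_smul_set_iff₀ hr.ne']), mul_zero]
  have hjac : ENNReal.ofReal |(r ^ dim V)⁻¹| = ENNReal.ofReal r ^ (-(dim V : ℝ)) := by
    rw [ENNReal.ofReal_rpow_of_pos hr, Real.rpow_neg hr.le, Real.rpow_natCast,
      abs_of_pos (by positivity)]
  rw [← lintegral_indicator hS, ← lintegral_indicator (hS.const_smul_of_ne_zero hr.ne')]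
  simp only [hind]
  rw [lintegral_const_mul' _ _ (ENNReal.rpow_ne_top_of_ne_zero hr₀ ENNReal.ofReal_ne_top),
    lintegral_comp_smul μ _ hr.ne', hjac, ← mul_assoc, mul_right_comm,
    ← ENNReal.rpow_add _ _ hr₀ ENNReal.ofReal_ne_top,
    ← ENNReal.rpow_add _ _ hr₀ ENNReal.ofReal_ne_top]
  ring_nf
  rw [ENNReal.rpow_zero, one_mul]

theorem setLIntegral_closedBall_enorm_rpow {r : ℝ} (hr : 0 < r) (s : ℝ) :
    ∫⁻ x in closedBall 0 r, ‖x‖ₑ ^ s ∂μ =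
      (∫⁻ x in closedBall 0 1, ‖x‖ₑ ^ s ∂μ) * ENNReal.ofReal r ^ (dim V + s) := by
  rw [← setLIntegral_smul_enorm_rpow μ hr isClosed_closedBall.measurableSet,
    smul_unitClosedBall_of_nonneg hr.le]

theorem setLIntegral_compl_ball_enorm_rpow {r : ℝ} (hr : 0 < r) (s : ℝ) :
    ∫⁻ x in (ball 0 r)ᶜ, ‖x‖ₑ ^ s ∂μ =
      (∫⁻ x in (ball 0 1)ᶜ, ‖x‖ₑ ^ s ∂μ) * ENNReal.ofReal r ^ (dim V + s) := by
  have hsmul : r • (ball (0 : V) 1)ᶜ = (ball 0 r)ᶜ := by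
    rw [← smul_unitBall_of_pos hr]
    exact Set.smul_set_compl (a := Units.mk0 r hr.ne')
  rw [← setLIntegral_smul_enorm_rpow μ hr isOpen_ball.measurableSet.compl, hsmul]

theorem setLIntegral_unitClosedBall_enorm_rpow_ne_top [Nontrivial V] {s : ℝ} (hs : -dim V < s) :
    ∫⁻ x in closedBall 0 1, ‖x‖ₑ ^ s ∂μ ≠ ⊤ := by
  have hint : IntegrableOn (fun x : V => ‖x‖ ^ s) (ball 0 2) μ :=
    integrableOn_ball_of_norm_le_rpow (C := 1) (α := -s) Module.finrank_pos (by linarith)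
      (.of_forall fun x => by rw [neg_neg, one_mul, Real.norm_of_nonneg (by positivity)])
      (measurable_norm.pow_const _).aestronglyMeasurable
  refine ((lintegral_congr_ae ?_).trans_lt
    (hint.mono_set (closedBall_subset_ball one_lt_two)).2).ne
  filter_upwards [ae_restrict_of_ae (Measure.ae_ne μ (0 : V))] with x hx
  rw [Real.enorm_eq_ofReal (by positivity), ← ENNReal.ofReal_rpow_of_pos (norm_pos_iff.2 hx),
    ofReal_norm]

theorem setLIntegral_compl_unitBall_enorm_rpow_ne_top {s : ℝ} (hs : s < -dim V) :
    ∫⁻ x in (ball 0 1)ᶜ, ‖x‖ₑ ^ s ∂μ ≠ ⊤ := by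
  have hs₀ : s ≤ 0 := hs.le.trans (by simp)
  have hfin := finite_integral_one_add_norm (μ := μ) (r := -s) (by linarith)
  have hle : ∀ x ∈ (ball (0 : V) 1)ᶜ, ‖x‖ₑ ^ s ≤
      ENNReal.ofReal (2 ^ (-s)) * ENNReal.ofReal ((1 + ‖x‖) ^ (- -s)) := by
    intro x hx
    have hx₁ : 1 ≤ ‖x‖ := by simpa using hx
    rw [← ofReal_norm, ENNReal.ofReal_rpow_of_pos (by positivity),
      ← ENNReal.ofReal_mul (by positivity), neg_neg]
    refine ENNReal.ofReal_le_ofReal ?_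
    calc ‖x‖ ^ s ≤ (2⁻¹ * (1 + ‖x‖)) ^ s :=
          Real.rpow_le_rpow_of_nonpos (by positivity) (by linarith) hs₀
      _ = 2 ^ (-s) * (1 + ‖x‖) ^ s := by
          rw [Real.mul_rpow (by positivity) (by positivity), Real.inv_rpow two_pos.le,
            Real.rpow_neg two_pos.le]
  refine ((setLIntegral_mono' isOpen_ball.measurableSet.compl hle).trans
    (setLIntegral_le_lintegral _ _)).trans_lt ?_ |>.ne
  rw [lintegral_const_mul' _ _ ENNReal.ofReal_ne_top]
  exact ENNReal.mul_lt_top ENNReal.ofReal_lt_top hfin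

end AddHaar

section HardyInequality

variable [MeasureSpace V] [BorelSpace V]

theorem lintegral_mul_radialMass [SecondCountableTopology V] [SFinite (volume : Measure V)]
    {φ ψ : V → ℝ≥0∞} (hφ : AEMeasurable φ) (hψ : AEMeasurable ψ) :
    ∫⁻ ξ, ψ ξ * radialMass φ ξ = ∫⁻ η, φ η * ∫⁻ ξ in (ball 0 ‖η‖)ᶜ, ψ ξ := by
  have hle : MeasurableSet {z : V × V | ‖z.2‖ ≤ ‖z.1‖} :=
    measurableSet_le (by fun_prop) (by fun_prop)
  have hψφ : AEMeasurable (fun z : V × V => ψ z.1 * φ z.2) (volume.prod volume) :=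
    (hψ.comp_quasiMeasurePreserving Measure.quasiMeasurePreserving_fst).mul
      (hφ.comp_quasiMeasurePreserving Measure.quasiMeasurePreserving_snd)
  have hfst (ξ : V) : ψ ξ * radialMass φ ξ =
      ∫⁻ η, {z : V × V | ‖z.2‖ ≤ ‖z.1‖}.indicator (fun z => ψ z.1 * φ z.2) (ξ, η) := by
    rw [radialMass, ← lintegral_const_mul'' _ hφ.restrict,
      ← lintegral_indicator isClosed_closedBall.measurableSet]
    refine lintegral_congr fun η => ?_
    by_cases h : ‖η‖ ≤ ‖ξ‖ <;> simp [Set.indicator, h]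
  have hsnd (η : V) : φ η * ∫⁻ ξ in (ball 0 ‖η‖)ᶜ, ψ ξ =
      ∫⁻ ξ, {z : V × V | ‖z.2‖ ≤ ‖z.1‖}.indicator (fun z => ψ z.1 * φ z.2) (ξ, η) := by
    rw [← lintegral_const_mul'' _ hψ.restrict,
      ← lintegral_indicator isOpen_ball.measurableSet.compl]
    refine lintegral_congr fun ξ => ?_
    by_cases h : ‖η‖ ≤ ‖ξ‖ <;> simp [Set.indicator, h, mul_comm]
  simp only [hfst, hsnd]
  exact lintegral_lintegral_swap (hψφ.indicator hle)

variable [NormedSpace ℝ V] [FiniteDimensional ℝ V] [(volume : Measure V).IsAddHaarMeasure]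
  [Nontrivial V]

theorem lintegral_enorm_rpow_mul_radialMass {φ : V → ℝ≥0∞} (hφ : AEMeasurable φ) (s : ℝ) :
    ∫⁻ ξ, ‖ξ‖ₑ ^ s * radialMass φ ξ =
      (∫⁻ ξ in (ball (0 : V) 1)ᶜ, ‖ξ‖ₑ ^ s) * ∫⁻ η, φ η * ‖η‖ₑ ^ (dim V + s) := by
  have hpow (s : ℝ) : Measurable fun η : V => ‖η‖ₑ ^ s := by fun_prop
  have hweight : AEMeasurable fun η => φ η * ‖η‖ₑ ^ (dim V + s) := hφ.mul (hpow _).aemeasurable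
  rw [lintegral_mul_radialMass hφ (hpow s).aemeasurable,
    ← lintegral_const_mul'' _ hweight]
  refine lintegral_congr_ae ?_
  filter_upwards [Measure.ae_ne volume (0 : V)] with η hη
  rw [setLIntegral_compl_ball_enorm_rpow volume (norm_pos_iff.2 hη), ofReal_norm, mul_left_comm]

-- Any power of `‖η‖ₑ` strictly between `dim V * (p - 2)` and `dim V * (p - 1)` would do: the upper
-- end makes the dual weight locally integrable, the lower end makes the remaining integral over `ξ`
-- in `exists_lintegral_radialMass_rpow_le` converge at infinity.
theorem radialMass_rpow_le {p : ℝ} (hp : 1 < p) {φ : V → ℝ≥0∞} (hφ : AEMeasurable φ) {ξ : V}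
    (hξ : ξ ≠ 0) :
    radialMass φ ξ ^ p ≤
      (∫⁻ η in closedBall (0 : V) 1, ‖η‖ₑ ^ (-(dim V * (p - 3 / 2) / (p - 1)))) ^ (p - 1) *
        ‖ξ‖ₑ ^ (dim V / 2 : ℝ) *
        radialMass (fun η => φ η ^ p * ‖η‖ₑ ^ (dim V * (p - 3 / 2))) ξ := by
  have hp₀ : 0 < p := by linarith
  have hp₁ : 0 < p - 1 := by linarith
  set a : ℝ := dim V * (p - 3 / 2) / p
  have hsplit : radialMass φ ξ =
      ∫⁻ η in closedBall 0 ‖ξ‖, φ η * ‖η‖ₑ ^ a * ‖η‖ₑ ^ (-a) := by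
    refine lintegral_congr_ae ?_
    filter_upwards [ae_restrict_of_ae (Measure.ae_ne volume (0 : V))] with η hη
    rw [mul_assoc, enorm_rpow_mul_enorm_rpow hη, add_neg_cancel, ENNReal.rpow_zero, mul_one]
  have hap : a * p = dim V * (p - 3 / 2) := div_mul_cancel₀ _ hp₀.ne'
  have hexp : -a * (p / (p - 1)) = -(dim V * (p - 3 / 2) / (p - 1)) := by
    rw [← hap]
    ring
  have hscale : (dim V + -(dim V * (p - 3 / 2) / (p - 1))) * (p - 1) = (dim V / 2 : ℝ) := by
    field_simp
    ring
  have hpow (s : ℝ) : Measurable fun η : V => ‖η‖ₑ ^ s := by fun_prop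
  have holder := lintegral_mul_rpow_le (μ := volume.restrict (closedBall 0 ‖ξ‖)) hp
    (hφ.restrict.mul (hpow a).aemeasurable) (hpow (-a)).aemeasurable
  simp only [Pi.mul_apply, ENNReal.mul_rpow_of_nonneg _ _ hp₀.le, ← ENNReal.rpow_mul, hap,
    hexp] at holder
  rw [setLIntegral_closedBall_enorm_rpow volume (norm_pos_iff.2 hξ), ofReal_norm,
    ENNReal.mul_rpow_of_nonneg _ _ hp₁.le, ← ENNReal.rpow_mul, hscale] at holder
  rw [hsplit]
  exact holder.trans_eq (mul_comm _ _)

theorem exists_lintegral_radialMass_rpow_le {p : ℝ} (hp : 1 < p) :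
    ∃ c ≠ (⊤ : ℝ≥0∞), ∀ φ : V → ℝ≥0∞, AEMeasurable φ →
      ∫⁻ ξ, radialMass φ ξ ^ p * ‖ξ‖ₑ ^ (-(2 * dim V) : ℝ) ≤
        c * ∫⁻ ξ, φ ξ ^ p * ‖ξ‖ₑ ^ (dim V * (p - 2)) := by
  have hp₁ : 0 < p - 1 := by linarith
  have hV : (0 : ℝ) < dim V := by exact_mod_cast Module.finrank_pos
  set c₀ := ∫⁻ η in closedBall (0 : V) 1, ‖η‖ₑ ^ (-(dim V * (p - 3 / 2) / (p - 1)))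
  set c₁ := ∫⁻ ξ in (ball (0 : V) 1)ᶜ, ‖ξ‖ₑ ^ (-(3 / 2 * dim V) : ℝ)
  have hc₀ : c₀ ≠ ⊤ := setLIntegral_unitClosedBall_enorm_rpow_ne_top _ <| by
    rw [neg_lt_neg_iff, div_lt_iff₀ hp₁]
    nlinarith
  have hc₁ : c₁ ≠ ⊤ := setLIntegral_compl_unitBall_enorm_rpow_ne_top _ (by linarith)
  refine ⟨c₀ ^ (p - 1) * c₁, ENNReal.mul_ne_top (ENNReal.rpow_ne_top_of_nonneg hp₁.le hc₀) hc₁,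
    fun φ hφ => ?_⟩
  set Φ : V → ℝ≥0∞ := fun η => φ η ^ p * ‖η‖ₑ ^ (dim V * (p - 3 / 2))
  have hpow (s : ℝ) : Measurable fun η : V => ‖η‖ₑ ^ s := by fun_prop
  have hΦ : AEMeasurable Φ := (hφ.pow_const p).mul (hpow _).aemeasurable
  calc ∫⁻ ξ, radialMass φ ξ ^ p * ‖ξ‖ₑ ^ (-(2 * dim V) : ℝ)
      ≤ ∫⁻ ξ, c₀ ^ (p - 1) * (‖ξ‖ₑ ^ (-(3 / 2 * dim V) : ℝ) * radialMass Φ ξ) := by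
        refine lintegral_mono_ae ?_
        filter_upwards [Measure.ae_ne volume (0 : V)] with ξ hξ
        refine (mul_le_mul_left (radialMass_rpow_le hp hφ hξ) _).trans_eq ?_
        rw [mul_right_comm, mul_assoc (_ ^ (p - 1)), enorm_rpow_mul_enorm_rpow hξ, mul_assoc,
          show dim V / 2 + -(2 * dim V) = (-(3 / 2 * dim V) : ℝ) by ring]
    _ = c₀ ^ (p - 1) * (c₁ * ∫⁻ η, Φ η * ‖η‖ₑ ^ (dim V + -(3 / 2 * dim V) : ℝ)) := by
        have hmeas : Measurable fun ξ => ‖ξ‖ₑ ^ (-(3 / 2 * dim V) : ℝ) * radialMass Φ ξ :=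
          (hpow _).mul (measurable_radialMass Φ)
        rw [lintegral_const_mul _ hmeas, lintegral_enorm_rpow_mul_radialMass hΦ]
    _ = _ := by
        rw [mul_assoc]
        congr 2
        refine lintegral_congr_ae ?_
        filter_upwards [Measure.ae_ne volume (0 : V)] with η hη
        rw [mul_assoc, enorm_rpow_mul_enorm_rpow hη]
        ring_nf

theorem exists_lintegral_sq_mul_radialMass_rpow_le {p : ℝ} (hp : 2 ≤ p) :
    ∃ c ≠ (⊤ : ℝ≥0∞), ∀ φ : V → ℝ≥0∞, AEMeasurable φ →
      ∫⁻ ξ, φ ξ ^ (2 : ℝ) * radialMass φ ξ ^ (p - 2) ≤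
        c * ∫⁻ ξ, φ ξ ^ p * ‖ξ‖ₑ ^ (dim V * (p - 2)) := by
  have hp₀ : 0 < p := by linarith
  have hexp : 0 ≤ (p - 2) / p := div_nonneg (by linarith) hp₀.le
  obtain ⟨c, hc, hardy⟩ := exists_lintegral_radialMass_rpow_le (V := V) (by linarith : 1 < p)
  refine ⟨c ^ ((p - 2) / p), ENNReal.rpow_ne_top_of_nonneg hexp hc, fun φ hφ => ?_⟩
  have hweight : ∀ᵐ ξ : V, ‖ξ‖ₑ ^ (dim V : ℝ) ≠ 0 := by
    filter_upwards [Measure.ae_ne volume (0 : V)] with ξ hξ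
    exact (ENNReal.rpow_pos (enorm_pos.2 hξ) enorm_ne_top).ne'
  have holder := lintegral_sq_mul_rpow_le hp hφ (measurable_radialMass φ).aemeasurable
    (by fun_prop) hweight (.of_forall fun ξ => by finiteness)
  simp only [← ENNReal.rpow_mul, mul_neg, mul_comm (dim V : ℝ) 2] at holder
  calc ∫⁻ ξ, φ ξ ^ (2 : ℝ) * radialMass φ ξ ^ (p - 2)
      ≤ (∫⁻ ξ, φ ξ ^ p * ‖ξ‖ₑ ^ (dim V * (p - 2))) ^ (2 / p) *
          (c * ∫⁻ ξ, φ ξ ^ p * ‖ξ‖ₑ ^ (dim V * (p - 2))) ^ ((p - 2) / p) := by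
        refine holder.trans ?_
        gcongr
        exact hardy φ hφ
    _ = c ^ ((p - 2) / p) * ∫⁻ ξ, φ ξ ^ p * ‖ξ‖ₑ ^ (dim V * (p - 2)) := by
        rw [ENNReal.mul_rpow_of_nonneg _ _ hexp, mul_left_comm,
          ← ENNReal.rpow_add_of_nonneg _ _ (by positivity) hexp, ← add_div,
          add_sub_cancel, div_self hp₀.ne', ENNReal.rpow_one]

end HardyInequality

section Pitt

variable {F : Type*} [InnerProductSpace ℝ V] [FiniteDimensional ℝ V] [MeasurableSpace V]
  [BorelSpace V] [Nontrivial V] [NormedAddCommGroup F] [InnerProductSpace ℂ F] [CompleteSpace F]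

theorem exists_lintegral_enorm_fourier_rpow_le {p : ℝ} (hp : 2 ≤ p) :
    ∃ c ≠ (⊤ : ℝ≥0∞), ∀ w : V → F, Integrable w → MemLp w 2 →
      ∫⁻ y, ‖𝓕 w y‖ₑ ^ p ≤ c * ∫⁻ ξ, ‖w ξ‖ₑ ^ p * ‖ξ‖ₑ ^ (dim V * (p - 2)) := by
  rcases hp.eq_or_lt with rfl | hp
  · exact ⟨1, ENNReal.one_ne_top, fun w h₁ h₂ => by
      rw [lintegral_enorm_fourier_sq h₁ h₂]
      simp⟩
  obtain ⟨c, hc, h⟩ := exists_lintegral_sq_mul_radialMass_rpow_le (V := V) hp.le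
  have h₂_top : (2 : ℝ≥0∞) ^ (p - 2) ≠ ⊤ :=
    ENNReal.rpow_ne_top_of_nonneg (by linarith) ENNReal.ofNat_ne_top
  refine ⟨4 * ENNReal.ofReal (p / (p - 2)) * 2 ^ (p - 2) * c, by finiteness, fun w h₁ h₂ => ?_⟩
  refine (lintegral_enorm_fourier_rpow_le hp h₁ h₂).trans ?_
  simp only [ENNReal.mul_rpow_of_nonneg _ _ (sub_nonneg.2 hp.le),
    mul_left_comm _ ((2 : ℝ≥0∞) ^ (p - 2))]
  rw [lintegral_const_mul' _ _ h₂_top, ← mul_assoc, mul_assoc _ c]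
  gcongr
  exact h _ h₁.1.enorm

end Pitt

end PowerWeights

section Subordination

open ProbabilityTheory

theorem exists_exp_neg_div_le (a : ℝ) {r : ℝ} (hr : 0 < r) :
    ∃ C : ℝ, 0 ≤ C ∧ ∀ s : ℝ, 0 ≤ s → Real.exp (-(s / r)) ≤ C * (1 + s) ^ (-a) := by
  obtain ⟨n, hn⟩ := exists_nat_ge a
  refine ⟨n.factorial * r ^ n * Real.exp (1 / r), by positivity, fun s hs => ?_⟩
  have hpow : (1 + s) ^ a ≤ (1 + s) ^ n := by
    rw [← Real.rpow_natCast]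
    exact Real.rpow_le_rpow_of_exponent_le (by linarith) hn
  have hexp := Real.pow_div_factorial_le_exp ((1 + s) / r) (by positivity) n
  rw [Real.rpow_neg (by positivity), ← div_eq_mul_inv, le_div_iff₀ (by positivity)]
  calc Real.exp (-(s / r)) * (1 + s) ^ a
      ≤ Real.exp (-(s / r)) * (n.factorial * r ^ n * Real.exp ((1 + s) / r)) := by
        gcongr
        refine hpow.trans ?_
        rwa [div_pow, div_div, div_le_iff₀ (by positivity), mul_comm, mul_comm (r ^ n)] at hexp
    _ = n.factorial * r ^ n * Real.exp (1 / r) := by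
        rw [mul_left_comm, ← Real.exp_add]
        ring_nf

/-- The mixing measure of the Gaussian subordination formula `(1+s)^{-a} = ∫ e^{-ts} dν(t)`: the
`Γ(a, 1)` law for `a > 0`, and the point mass at `0` for `a = 0`. -/
def subordinator (a : ℝ) : Measure ℝ := if a = 0 then Measure.dirac 0 else gammaMeasure a 1

variable {a : ℝ}

theorem isProbabilityMeasure_subordinator (ha : 0 ≤ a) :
    IsProbabilityMeasure (subordinator a) := by
  rcases ha.eq_or_lt with rfl | ha
  · rw [subordinator, if_pos rfl]
    infer_instance
  · rw [subordinator, if_neg ha.ne']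
    exact isProbabilityMeasure_gammaMeasure ha one_pos

theorem ae_nonneg_subordinator (a : ℝ) : ∀ᵐ t ∂subordinator a, 0 ≤ t := by
  rw [subordinator]
  split_ifs
  · simp
  · have hneg : {t : ℝ | ¬0 ≤ t} = Set.Iio 0 := Set.ext fun t => not_le
    rw [ae_iff, hneg, gammaMeasure, withDensity_apply _ measurableSet_Iio]
    exact lintegral_gammaPDF_of_nonpos le_rfl

theorem lintegral_exp_gammaMeasure (ha : 0 < a) {s : ℝ} (hs : 0 ≤ s) :
    ∫⁻ t, ENNReal.ofReal (Real.exp (-(t * s))) ∂gammaMeasure a 1 =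
      ENNReal.ofReal ((1 + s) ^ (-a)) := by
  have := Real.Gamma_pos_of_pos ha
  have hs₁ : 0 < 1 + s := by linarith
  have htilt (t : ℝ) : gammaPDF a 1 t * ENNReal.ofReal (Real.exp (-(t * s))) =
      ENNReal.ofReal ((1 + s) ^ (-a)) * gammaPDF a (1 + s) t := by
    rcases lt_or_ge t 0 with ht | ht
    · simp only [gammaPDF_of_neg ht, zero_mul, mul_zero]
    rw [gammaPDF_of_nonneg ht, gammaPDF_of_nonneg ht, ← ENNReal.ofReal_mul (by positivity),
      ← ENNReal.ofReal_mul (by positivity), mul_assoc, ← Real.exp_add, Real.one_rpow,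
      Real.rpow_neg hs₁.le]
    congr 1
    field_simp
    ring_nf
  have hpdf : Measurable (gammaPDF a 1) := by
    unfold gammaPDF
    fun_prop
  rw [gammaMeasure, lintegral_withDensity_eq_lintegral_mul _ hpdf (by fun_prop)]
  simp only [Pi.mul_apply, htilt]
  rw [lintegral_const_mul' _ _ ENNReal.ofReal_ne_top, lintegral_gammaPDF_eq_one ha hs₁, mul_one]

theorem lintegral_exp_subordinator (ha : 0 ≤ a) {s : ℝ} (hs : 0 ≤ s) :
    ∫⁻ t, ENNReal.ofReal (Real.exp (-(t * s))) ∂subordinator a =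
      ENNReal.ofReal ((1 + s) ^ (-a)) := by
  rcases ha.eq_or_lt with rfl | ha
  · simp [subordinator]
  · rw [subordinator, if_neg ha.ne', lintegral_exp_gammaMeasure ha hs]

theorem one_add_div_rpow_neg_le (ha : 0 ≤ a) {r s : ℝ} (hr : 1 ≤ r) (hs : 0 ≤ s) :
    (1 + s / r) ^ (-a) ≤ r ^ a * (1 + s) ^ (-a) := by
  have hr₀ : 0 < r := by linarith
  calc (1 + s / r) ^ (-a) ≤ (r⁻¹ * (1 + s)) ^ (-a) := by
        refine Real.rpow_le_rpow_of_nonpos (by positivity) ?_ (neg_nonpos.2 ha)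
        rw [mul_one_add, inv_mul_eq_div]
        gcongr
        exact inv_le_one_of_one_le₀ hr
    _ = r ^ a * (1 + s) ^ (-a) := by
        rw [Real.mul_rpow (by positivity) (by positivity), Real.inv_rpow hr₀.le,
          Real.rpow_neg hr₀.le, inv_inv]

theorem exists_lintegral_exp_subordinator_le (ha : 0 ≤ a) {r : ℝ} (hr : 0 ≤ r) :
    ∃ C : ℝ, 0 ≤ C ∧ ∀ s : ℝ, 0 ≤ s →
      ∫⁻ t, ENNReal.ofReal (Real.exp (-(t / (r * t + 1) * s))) ∂subordinator a ≤
        ENNReal.ofReal (C * (1 + s) ^ (-a)) := by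
  have := isProbabilityMeasure_subordinator ha
  obtain ⟨C, hC, hexp⟩ := exists_exp_neg_div_le a (by linarith : 0 < r + 1)
  refine ⟨(r + 1) ^ a + C, by positivity, fun s hs => ?_⟩
  have hsplit : ∀ᵐ t ∂subordinator a, ENNReal.ofReal (Real.exp (-(t / (r * t + 1) * s))) ≤
      ENNReal.ofReal (Real.exp (-(t * (s / (r + 1))))) +
        ENNReal.ofReal (Real.exp (-(s / (r + 1)))) := by
    filter_upwards [ae_nonneg_subordinator a] with t ht
    -- `t / (r * t + 1)` is at least `t / (r + 1)` if `t ≤ 1`, and `1 / (r + 1)` if `1 ≤ t`.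
    rw [div_mul_eq_mul_div, ← mul_div_assoc]
    rcases le_total t 1 with h | h
    · refine le_add_right (ENNReal.ofReal_le_ofReal (Real.exp_le_exp.2 (neg_le_neg ?_)))
      gcongr
      nlinarith
    · refine le_add_left (ENNReal.ofReal_le_ofReal (Real.exp_le_exp.2 (neg_le_neg ?_)))
      rw [div_le_div_iff₀ (by positivity) (by positivity)]
      nlinarith
  calc ∫⁻ t, ENNReal.ofReal (Real.exp (-(t / (r * t + 1) * s))) ∂subordinator a
      ≤ ENNReal.ofReal ((1 + s / (r + 1)) ^ (-a) + Real.exp (-(s / (r + 1)))) := by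
        refine (lintegral_mono_ae hsplit).trans_eq ?_
        rw [lintegral_add_left (by fun_prop), lintegral_exp_subordinator ha (by positivity),
          lintegral_const, measure_univ, mul_one,
          ← ENNReal.ofReal_add (by positivity) (by positivity)]
    _ ≤ ENNReal.ofReal (((r + 1) ^ a + C) * (1 + s) ^ (-a)) := by
        rw [add_mul]
        exact ENNReal.ofReal_le_ofReal
          (add_le_add (one_add_div_rpow_neg_le ha (by linarith) hs) (hexp s hs))

end Subordination

section Gabor

variable {V F : Type*} [NormedAddCommGroup V] [InnerProductSpace ℝ V]

/-- The Gabor atom of frequency `ξ` with Gaussian envelope `exp (-b‖·‖²)`; at `ξ = 0` it is the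
Gaussian itself. -/
def gaborAtom (b : ℝ) (ξ v : V) : ℂ := cexp (-b * ‖v‖ ^ 2 + 2 * π * I * ⟪ξ, v⟫)

@[fun_prop]
theorem continuous_gaborAtom (b : ℝ) (ξ : V) : Continuous (gaborAtom b ξ) := by
  unfold gaborAtom
  fun_prop

theorem norm_gaborAtom (b : ℝ) (ξ v : V) : ‖gaborAtom b ξ v‖ = Real.exp (-b * ‖v‖ ^ 2) := by
  rw [gaborAtom, Complex.norm_exp, Complex.add_re, ← Complex.ofReal_neg, ← Complex.ofReal_pow,
    ← Complex.ofReal_mul, Complex.ofReal_re]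
  simp

theorem norm_gaborAtom_le_one {b : ℝ} (hb : 0 ≤ b) (ξ v : V) : ‖gaborAtom b ξ v‖ ≤ 1 := by
  rw [norm_gaborAtom, neg_mul]
  exact Real.exp_le_one_iff.2 (by nlinarith [sq_nonneg ‖v‖])

theorem enorm_gaborAtom_rpow (b : ℝ) {p : ℝ} (hp : 0 ≤ p) (ξ v : V) :
    ‖gaborAtom b ξ v‖ₑ ^ p = ‖gaborAtom (b * p) ξ v‖ₑ := by
  rw [← ofReal_norm, ← ofReal_norm, norm_gaborAtom, norm_gaborAtom,
    ENNReal.ofReal_rpow_of_nonneg (Real.exp_pos _).le hp, ← Real.exp_mul]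
  ring_nf

theorem gaborAtom_mul_gaborAtom (b c : ℝ) (ξ η v : V) :
    gaborAtom b ξ v * gaborAtom c η v = gaborAtom (b + c) (ξ + η) v := by
  simp only [gaborAtom, ← Complex.exp_add, inner_add_left]
  push_cast
  ring_nf

theorem gaborAtom_sub_right (b : ℝ) (x ξ η : V) :
    gaborAtom b x (ξ - η) =
      Real.fourierChar ⟪x, ξ⟫ • Real.fourierChar (-⟪η, x⟫) • gaborAtom b 0 (ξ - η) := by
  simp only [Circle.smul_def, smul_eq_mul, Real.fourierChar_apply, gaborAtom, ← Complex.exp_add,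
    inner_sub_right, inner_zero_left, real_inner_comm η x]
  push_cast
  ring_nf

variable [MeasurableSpace V] [BorelSpace V]

@[fun_prop]
theorem measurable_gaborAtom (b : ℝ) (ξ : V) : Measurable (gaborAtom b ξ) :=
  (continuous_gaborAtom b ξ).measurable

variable [FiniteDimensional ℝ V]

theorem integrable_gaborAtom {b : ℝ} (hb : 0 < b) (ξ : V) : Integrable (gaborAtom b ξ) :=
  GaussianFourier.integrable_cexp_neg_mul_sq_norm_add (b := (b : ℂ)) (by simpa using hb) _ ξ

theorem lintegral_enorm_gaborAtom {b : ℝ} (hb : 0 < b) (ξ : V) :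
    ∫⁻ v, ‖gaborAtom b ξ v‖ₑ = ENNReal.ofReal ((π / b) ^ (dim V / 2 : ℝ)) := by
  rw [← ofReal_integral_norm_eq_lintegral_enorm (integrable_gaborAtom hb ξ)]
  simp only [norm_gaborAtom]
  rw [GaussianFourier.integral_rexp_neg_mul_sq_norm hb]

theorem fourier_gaborAtom {b : ℝ} (hb : 0 < b) (ξ η : V) :
    𝓕 (gaborAtom b ξ) η =
      ((π / b) ^ (dim V / 2 : ℝ) : ℝ) * gaborAtom (π ^ 2 / b) 0 (ξ - η) := by
  refine (fourier_gaussian_innerProductSpace' (b := (b : ℂ)) (by simpa using hb) ξ η).trans ?_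
  rw [gaborAtom, Complex.ofReal_cpow (by positivity), inner_zero_left]
  push_cast
  congr 2
  ring

variable [NormedAddCommGroup F] [InnerProductSpace ℂ F]

/-- The short-time Fourier transform of `h` with window `exp (-b‖·‖²)`, normalized as the
convolution `x ↦ (h ∗ gaborAtom b ξ) x`; compared with `∫ h(t) e^{-b|t-x|²} e^{-2πi⟨ξ,t⟩} dt` it
carries the unimodular factor `e^{2πi⟨ξ,x⟩}`. -/
def gabor (b : ℝ) (h : V → F) (x ξ : V) : F := ∫ t, gaborAtom b ξ (x - t) • h t

theorem enorm_gabor_le_lintegral {b : ℝ} (hb : 0 ≤ b) (h : V → F) (x ξ : V) :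
    ‖gabor b h x ξ‖ₑ ≤ ∫⁻ t, ‖h t‖ₑ := by
  refine (enorm_integral_le_lintegral_enorm _).trans (lintegral_mono fun t => ?_)
  rw [enorm_smul]
  refine mul_le_of_le_one_left' ?_
  rw [← ofReal_norm]
  exact ENNReal.ofReal_le_one.2 (norm_gaborAtom_le_one hb _ _)

theorem stronglyMeasurable_uncurry_gabor (b : ℝ) {h : V → F} (hh : AEStronglyMeasurable h) :
    StronglyMeasurable (Function.uncurry (gabor b h)) := by
  have hcongr : gabor b h = gabor b (hh.mk h) := by
    ext x ξ
    refine integral_congr_ae ?_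
    filter_upwards [hh.ae_eq_mk] with t ht
    rw [ht]
  have hatom : Continuous fun z : (V × V) × V => gaborAtom b z.1.2 (z.1.1 - z.2) := by
    unfold gaborAtom
    fun_prop
  have hmeas : StronglyMeasurable fun z : (V × V) × V =>
      gaborAtom b z.1.2 (z.1.1 - z.2) • hh.mk h z.2 :=
    hatom.stronglyMeasurable.smul (hh.stronglyMeasurable_mk.comp_measurable measurable_snd)
  rw [hcongr]
  exact hmeas.integral_prod_right

theorem gabor_eq_convolution (b : ℝ) (h : V → F) (ξ : V) :
    (gabor b h · ξ) = gaborAtom b ξ ⋆[ContinuousLinearMap.lsmul ℂ ℂ] h := by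
  ext x
  rw [convolution_eq_swap]
  rfl

theorem integrable_gabor {b : ℝ} (hb : 0 < b) {h : V → F} (hh : Integrable h) (ξ : V) :
    Integrable (gabor b h · ξ) := by
  rw [gabor_eq_convolution]
  exact (integrable_gaborAtom hb ξ).integrable_convolution _ hh

theorem memLp_two_gabor {b : ℝ} (hb : 0 < b) {h : V → F} (hh : Integrable h) (ξ : V) :
    MemLp (gabor b h · ξ) 2 :=
  memLp_two_of_enorm_le (integrable_gabor hb hh ξ) hh.2.ne
    fun x => enorm_gabor_le_lintegral hb.le h x ξ

theorem fourier_gabor [CompleteSpace F] {b : ℝ} (hb : 0 < b) {h : V → F} (hh : Integrable h)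
    (ξ η : V) : 𝓕 (gabor b h · ξ) η = 𝓕 (gaborAtom b ξ) η • 𝓕 h η := by
  rw [gabor_eq_convolution, Real.fourier_smul_convolution_eq (integrable_gaborAtom hb ξ) hh]

theorem exists_lintegral_enorm_fourier_gabor_rpow_eq [CompleteSpace F] {b p : ℝ} (hb : 0 < b)
    (hp : 0 < p) : ∃ κ : ℝ≥0∞, κ ≠ 0 ∧ κ ≠ ⊤ ∧ ∀ h : V → F, Integrable h →
      ∫⁻ ξ, ∫⁻ η, ‖𝓕 (gabor b h · ξ) η‖ₑ ^ p = κ * ∫⁻ η, ‖𝓕 h η‖ₑ ^ p := by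
  set c : ℝ := (π / b) ^ (dim V / 2 : ℝ)
  have hc : 0 < c := by positivity
  have hbp : 0 < π ^ 2 / b * p := by positivity
  refine ⟨‖(c : ℂ)‖ₑ ^ p * ENNReal.ofReal ((π / (π ^ 2 / b * p)) ^ (dim V / 2 : ℝ)),
    mul_ne_zero ?_ ?_, by finiteness, fun h hh => ?_⟩
  · simp [hc.ne', hp.not_gt]
  · rw [Ne, ENNReal.ofReal_eq_zero, not_le]
    positivity
  have hfour (ξ η : V) : ‖𝓕 (gabor b h · ξ) η‖ₑ ^ p =
      ‖(c : ℂ)‖ₑ ^ p * ‖𝓕 h η‖ₑ ^ p * ‖gaborAtom (π ^ 2 / b * p) 0 (ξ - η)‖ₑ := by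
    rw [fourier_gabor hb hh, fourier_gaborAtom hb, enorm_smul, enorm_mul,
      ENNReal.mul_rpow_of_nonneg _ _ hp.le, ENNReal.mul_rpow_of_nonneg _ _ hp.le,
      enorm_gaborAtom_rpow _ hp.le, mul_right_comm]
  have hF : Measurable fun η => ‖𝓕 h η‖ₑ ^ p :=
    (continuous_fourier hh).stronglyMeasurable.enorm.pow_const p
  have hA : Measurable fun z : V × V => ‖gaborAtom (π ^ 2 / b * p) 0 (z.1 - z.2)‖ₑ := by
    fun_prop
  simp only [hfour]
  rw [lintegral_lintegral_swap
    (((hF.comp measurable_snd).const_mul _).mul hA).aemeasurable]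
  calc ∫⁻ η, ∫⁻ ξ, ‖(c : ℂ)‖ₑ ^ p * ‖𝓕 h η‖ₑ ^ p * ‖gaborAtom (π ^ 2 / b * p) 0 (ξ - η)‖ₑ
      = ∫⁻ η, ‖(c : ℂ)‖ₑ ^ p * ‖𝓕 h η‖ₑ ^ p *
          ENNReal.ofReal ((π / (π ^ 2 / b * p)) ^ (dim V / 2 : ℝ)) := by
        refine lintegral_congr fun η => ?_
        rw [lintegral_const_mul _ (by fun_prop),
          lintegral_sub_right_eq_self (fun v => ‖gaborAtom (π ^ 2 / b * p) 0 v‖ₑ) η,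
          lintegral_enorm_gaborAtom hbp]
    _ = _ := by
        rw [lintegral_mul_const' _ _ ENNReal.ofReal_ne_top,
          lintegral_const_mul' _ _ (by finiteness), mul_right_comm]

theorem exists_lintegral_enorm_fourier_rpow_le_gabor [CompleteSpace F] [Nontrivial V] {b p : ℝ}
    (hb : 0 < b) (hp : 2 ≤ p) : ∃ C ≠ (⊤ : ℝ≥0∞), ∀ h : V → F, Integrable h →
      ∫⁻ η, ‖𝓕 h η‖ₑ ^ p ≤ C * ∫⁻ ξ, ∫⁻ x, ‖gabor b h x ξ‖ₑ ^ p * ‖x‖ₑ ^ (dim V * (p - 2)) := by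
  obtain ⟨κ, hκ₀, hκ, heq⟩ :=
    exists_lintegral_enorm_fourier_gabor_rpow_eq (V := V) (F := F) hb (by linarith : 0 < p)
  obtain ⟨C, hC, hpitt⟩ := exists_lintegral_enorm_fourier_rpow_le (V := V) (F := F) hp
  refine ⟨κ⁻¹ * C, by finiteness, fun h hh => ?_⟩
  calc ∫⁻ η, ‖𝓕 h η‖ₑ ^ p
      = κ⁻¹ * ∫⁻ ξ, ∫⁻ η, ‖𝓕 (gabor b h · ξ) η‖ₑ ^ p := by
        rw [heq h hh, ← mul_assoc, ENNReal.inv_mul_cancel hκ₀ hκ, one_mul]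
    _ ≤ κ⁻¹ * ∫⁻ ξ, C * ∫⁻ x, ‖gabor b h x ξ‖ₑ ^ p * ‖x‖ₑ ^ (dim V * (p - 2)) := by
        gcongr with ξ
        exact hpitt _ (integrable_gabor hb hh ξ) (memLp_two_gabor hb hh ξ)
    _ = _ := by rw [lintegral_const_mul' _ _ hC, mul_assoc]

theorem lintegral_enorm_gabor_rpow_lt_top [CompleteSpace F] {b p : ℝ} (hb : 0 < b) (hp : 2 ≤ p)
    {h : V → F} (hh : Integrable h) (hF : Integrable (𝓕 h)) :
    ∫⁻ ξ, ∫⁻ x, ‖gabor b h x ξ‖ₑ ^ p < ⊤ := by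
  obtain ⟨κ, -, hκ, heq⟩ :=
    exists_lintegral_enorm_fourier_gabor_rpow_eq (V := V) (F := F) hb two_pos
  have hF₂ : ∫⁻ η, ‖𝓕 h η‖ₑ ^ (2 : ℝ) < ⊤ :=
    lintegral_rpow_enorm_lt_top_of_eLpNorm_lt_top two_ne_zero ENNReal.ofNat_ne_top
      (memLp_two_of_enorm_le hF hh.2.ne (enorm_fourier_le_lintegral h)).2
  have hM : (∫⁻ t, ‖h t‖ₑ) ^ (p - 2) ≠ ⊤ := ENNReal.rpow_ne_top_of_nonneg (by linarith) hh.2.ne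
  calc ∫⁻ ξ, ∫⁻ x, ‖gabor b h x ξ‖ₑ ^ p
      ≤ ∫⁻ ξ, ∫⁻ x, (∫⁻ t, ‖h t‖ₑ) ^ (p - 2) * ‖gabor b h x ξ‖ₑ ^ (2 : ℝ) := by
        gcongr with ξ x
        nth_rw 1 [← sub_add_cancel p 2]
        rw [ENNReal.rpow_add_of_nonneg _ _ (by linarith) zero_le_two]
        gcongr
        exact enorm_gabor_le_lintegral hb.le h x ξ
    _ = (∫⁻ t, ‖h t‖ₑ) ^ (p - 2) * (κ * ∫⁻ η, ‖𝓕 h η‖ₑ ^ (2 : ℝ)) := by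
        simp only [lintegral_const_mul' _ _ hM, ← heq h hh,
          lintegral_enorm_fourier_sq (integrable_gabor hb hh _) (memLp_two_gabor hb hh _)]
    _ < ⊤ := by finiteness

end Gabor

section BesselKernel

variable {V F : Type*} [NormedAddCommGroup V] [InnerProductSpace ℝ V]

/-- The symbol of `(1-Δ)^{-a}` with respect to `𝓕`, whose kernel is `e^{-2πi⟨x,η⟩}`: this is
`(1+|ζ|²)^{-a}` at the angular frequency `ζ = 2πη`. -/
def besselSymbol (a : ℝ) (η : V) : ℂ := ((1 + ‖(2 * π) • η‖ ^ 2) ^ (-a) : ℝ)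

@[fun_prop]
theorem continuous_besselSymbol (a : ℝ) : Continuous (besselSymbol (V := V) a) := by
  unfold besselSymbol
  refine Complex.continuous_ofReal.comp (.rpow_const (by fun_prop) fun η => .inl ?_)
  positivity

theorem enorm_besselSymbol (a : ℝ) (η : V) :
    ‖besselSymbol a η‖ₑ = ENNReal.ofReal ((1 + ‖(2 * π) • η‖ ^ 2) ^ (-a)) := by
  rw [besselSymbol, ← ofReal_norm, Complex.norm_of_nonneg (by positivity)]

theorem norm_besselSymbol_le_one {a : ℝ} (ha : 0 ≤ a) (η : V) : ‖besselSymbol a η‖ ≤ 1 := by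
  rw [besselSymbol, Complex.norm_of_nonneg (by positivity)]
  exact Real.rpow_le_one_of_one_le_of_nonpos (by nlinarith [sq_nonneg ‖(2 * π) • η‖])
    (neg_nonpos.2 ha)

theorem enorm_rpow_mul_enorm_besselSymbol_rpow_le_one {a p s : ℝ} (hp : 0 ≤ p) (hs : 0 ≤ s)
    (hsap : s ≤ 2 * a * p) (η : V) : ‖η‖ₑ ^ s * ‖besselSymbol a η‖ₑ ^ p ≤ 1 := by
  have hbase : 1 ≤ 1 + ‖(2 * π) • η‖ ^ 2 := by nlinarith [sq_nonneg ‖(2 * π) • η‖]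
  have hscale : ‖η‖ ≤ ‖(2 * π) • η‖ := by
    rw [norm_smul, Real.norm_of_nonneg (by positivity)]
    exact le_mul_of_one_le_left (norm_nonneg η) (by linarith [pi_gt_three])
  have hle : ‖η‖ ^ s ≤ (1 + ‖(2 * π) • η‖ ^ 2) ^ (a * p) :=
    calc ‖η‖ ^ s = (‖η‖ ^ 2) ^ (s / 2) := by
          rw [← Real.rpow_natCast_mul (norm_nonneg η)]
          congr 1
          push_cast
          ring
      _ ≤ (1 + ‖(2 * π) • η‖ ^ 2) ^ (s / 2) := by
          gcongr
          nlinarith [norm_nonneg η]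
      _ ≤ (1 + ‖(2 * π) • η‖ ^ 2) ^ (a * p) :=
          Real.rpow_le_rpow_of_exponent_le hbase (by linarith)
  rw [enorm_besselSymbol, ENNReal.ofReal_rpow_of_nonneg (by positivity) hp, ← ofReal_norm,
    ENNReal.ofReal_rpow_of_nonneg (norm_nonneg η) hs, ← ENNReal.ofReal_mul (by positivity),
    ENNReal.ofReal_le_one, ← Real.rpow_mul (by positivity), neg_mul,
    Real.rpow_neg (by positivity)]
  exact mul_inv_le_one_of_le₀ hle (by positivity)

theorem besselSymbol_eq_integral {a : ℝ} (ha : 0 ≤ a) (η : V) :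
    besselSymbol a η = ∫ t, gaborAtom ((2 * π) ^ 2 * t) 0 η ∂subordinator a := by
  have hexp : ∫ t, Real.exp (-(t * ‖(2 * π) • η‖ ^ 2)) ∂subordinator a =
      (1 + ‖(2 * π) • η‖ ^ 2) ^ (-a) := by
    rw [integral_eq_lintegral_of_nonneg_ae (.of_forall fun t => (Real.exp_pos _).le)
      (by fun_prop), lintegral_exp_subordinator ha (by positivity),
      ENNReal.toReal_ofReal (by positivity)]
  rw [besselSymbol, ← hexp, ← integral_complex_ofReal]
  refine integral_congr_ae (.of_forall fun t => ?_)
  dsimp only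
  rw [gaborAtom, inner_zero_left, norm_smul, Real.norm_of_nonneg (by positivity)]
  push_cast
  ring_nf

theorem gaborAtom_zero_left (b : ℝ) (v : V) :
    gaborAtom b 0 v = (Real.exp (-b * ‖v‖ ^ 2) : ℝ) := by
  rw [gaborAtom, inner_zero_left]
  push_cast
  ring_nf

theorem gaborAtom_zero_mul_gaborAtom_zero_sub {b c : ℝ} (hbc : b + c ≠ 0) (ξ η : V) :
    gaborAtom b 0 η * gaborAtom c 0 (ξ - η) =
      (Real.exp (-(b * c / (b + c) * ‖ξ‖ ^ 2)) : ℝ) *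
        gaborAtom (b + c) 0 (η + -(c / (b + c)) • ξ) := by
  simp only [gaborAtom_zero_left, ← Complex.ofReal_mul, ← Real.exp_add]
  rw [norm_sub_sq_real, norm_add_sq_real, norm_smul, real_inner_smul_right, real_inner_comm η ξ,
    mul_pow, Real.norm_eq_abs, sq_abs]
  congr 2
  field_simp
  ring

variable [FiniteDimensional ℝ V] [MeasurableSpace V] [BorelSpace V]

theorem lintegral_enorm_fourier_gaborAtom_comp_add {b : ℝ} (hb : 0 < b) (ξ v : V) :
    ∫⁻ y, ‖𝓕 (fun η => gaborAtom b ξ (η + v)) y‖ₑ = 1 := by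
  have hshift (y : V) : ‖𝓕 (fun η => gaborAtom b ξ (η + v)) y‖ₑ = ‖𝓕 (gaborAtom b ξ) y‖ₑ := by
    have h := congrFun (VectorFourier.fourierIntegral_comp_add_right Real.fourierChar
      (volume : Measure V) (innerₗ V) (gaborAtom b ξ) v) y
    refine (congrArg enorm h).trans ?_
    rw [← ofReal_norm, Circle.norm_smul, ofReal_norm]
    rfl
  simp only [hshift, fourier_gaborAtom hb, enorm_mul]
  rw [lintegral_const_mul' _ _ enorm_ne_top,
    lintegral_sub_left_eq_self (fun y => ‖gaborAtom (π ^ 2 / b) 0 y‖ₑ) ξ,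
    lintegral_enorm_gaborAtom (by positivity), ← ofReal_norm,
    Complex.norm_of_nonneg (by positivity), ← ENNReal.ofReal_mul (by positivity),
    ← Real.mul_rpow (by positivity) (by positivity)]
  have : π / b * (π / (π ^ 2 / b)) = 1 := by
    field_simp
  rw [this, Real.one_rpow, ENNReal.ofReal_one]

theorem lintegral_enorm_fourier_gaborAtom_mul {b c : ℝ} (hbc : 0 < b + c) (ξ : V) :
    ∫⁻ y, ‖𝓕 (fun η => gaborAtom b 0 η * gaborAtom c 0 (ξ - η)) y‖ₑ =
      ENNReal.ofReal (Real.exp (-(b * c / (b + c) * ‖ξ‖ ^ 2))) := by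
  have hfour (y : V) : 𝓕 (fun η => gaborAtom b 0 η * gaborAtom c 0 (ξ - η)) y =
      (Real.exp (-(b * c / (b + c) * ‖ξ‖ ^ 2)) : ℝ) *
        𝓕 (fun η => gaborAtom (b + c) 0 (η + -(c / (b + c)) • ξ)) y := by
    simp only [gaborAtom_zero_mul_gaborAtom_zero_sub hbc.ne', Real.fourier_eq]
    rw [← integral_const_mul]
    simp only [mul_smul_comm]
  simp only [hfour, enorm_mul]
  rw [lintegral_const_mul' _ _ enorm_ne_top, lintegral_enorm_fourier_gaborAtom_comp_add hbc,
    mul_one, ← ofReal_norm, Complex.norm_of_nonneg (Real.exp_pos _).le]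

theorem lintegral_enorm_fourier_integral_le {T : Type*} [MeasurableSpace T] {ν : Measure T}
    [SFinite ν] [NormedAddCommGroup F] [NormedSpace ℂ F] {w : V → T → F}
    (hw : Integrable (Function.uncurry w) (volume.prod ν)) :
    ∫⁻ y : V, ‖𝓕 (fun η => ∫ t, w η t ∂ν) y‖ₑ ≤ ∫⁻ t, (∫⁻ y : V, ‖𝓕 (w · t) y‖ₑ) ∂ν := by
  have hswap (y : V) : 𝓕 (fun η => ∫ t, w η t ∂ν) y = ∫ t, 𝓕 (w · t) y ∂ν := by
    have hchar : Measurable fun η : V => (Real.fourierChar (-⟪η, y⟫) : ℂ) := by fun_prop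
    simp only [Real.fourier_eq, Circle.smul_def, ← integral_smul]
    exact integral_integral_swap (hw.bdd_smul 1
      (hchar.comp measurable_fst).aestronglyMeasurable (.of_forall fun _ => (Circle.norm_coe _).le))
  have hmeas : AEStronglyMeasurable (fun z : V × T => 𝓕 (w · z.2) z.1) (volume.prod ν) := by
    have hchar : Measurable fun q : V × V => (Real.fourierChar (-⟪q.2, q.1⟫) : ℂ) := by fun_prop
    have hproj : Measure.QuasiMeasurePreserving (fun q : (V × T) × V => (q.2, q.1.2))
        ((volume.prod ν).prod volume) (volume.prod ν) :=
      (QuasiMeasurePreserving.prodMap (.id volume) Measure.quasiMeasurePreserving_snd).comp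
        Measure.measurePreserving_swap.quasiMeasurePreserving
    simp only [Real.fourier_eq, Circle.smul_def]
    exact ((hchar.comp (measurable_fst.fst.prodMk measurable_snd)).aestronglyMeasurable.smul
      (hw.1.comp_quasiMeasurePreserving hproj)).integral_prod_right'
  calc ∫⁻ y : V, ‖𝓕 (fun η => ∫ t, w η t ∂ν) y‖ₑ ≤ ∫⁻ y : V, (∫⁻ t, ‖𝓕 (w · t) y‖ₑ ∂ν) :=
        lintegral_mono fun y => by
          rw [hswap]
          exact enorm_integral_le_lintegral_enorm _
    _ = _ := lintegral_lintegral_swap hmeas.enorm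

theorem integrable_gaborAtom_mul_gaborAtom_sub_prod_subordinator {a c : ℝ} (ha : 0 ≤ a)
    (hc : 0 < c) (ξ : V) :
    Integrable (fun z : V × ℝ => gaborAtom ((2 * π) ^ 2 * z.2) 0 z.1 * gaborAtom c 0 (ξ - z.1))
      (volume.prod (subordinator a)) := by
  have := isProbabilityMeasure_subordinator ha
  have hcont : Continuous fun z : V × ℝ =>
      gaborAtom ((2 * π) ^ 2 * z.2) 0 z.1 * gaborAtom c 0 (ξ - z.1) := by
    unfold gaborAtom
    fun_prop
  refine (((integrable_gaborAtom hc 0).comp_sub_left ξ).comp_fst (subordinator a)).mono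
    hcont.aestronglyMeasurable ?_
  filter_upwards [Measure.quasiMeasurePreserving_snd.ae (ae_nonneg_subordinator a)] with z hz
  rw [norm_mul]
  exact mul_le_of_le_one_left (norm_nonneg _) (norm_gaborAtom_le_one (by positivity) _ _)

theorem exists_lintegral_enorm_fourier_besselSymbol_mul_gaborAtom_le {a c : ℝ} (ha : 0 ≤ a)
    (hc : 0 < c) : ∃ C ≠ (⊤ : ℝ≥0∞), ∀ ξ : V,
      ∫⁻ y, ‖𝓕 (fun η => besselSymbol a η * gaborAtom c 0 (ξ - η)) y‖ₑ ≤
        C * ‖besselSymbol a ξ‖ₑ := by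
  have := isProbabilityMeasure_subordinator ha
  obtain ⟨C, hC, hle⟩ :=
    exists_lintegral_exp_subordinator_le ha (r := (2 * π) ^ 2 / c) (by positivity)
  refine ⟨ENNReal.ofReal C, ENNReal.ofReal_ne_top, fun ξ => ?_⟩
  rw [enorm_besselSymbol, ← ENNReal.ofReal_mul hC]
  simp only [besselSymbol_eq_integral ha, ← integral_mul_const]
  refine (lintegral_enorm_fourier_integral_le
    (integrable_gaborAtom_mul_gaborAtom_sub_prod_subordinator ha hc ξ)).trans ?_
  refine (lintegral_congr_ae ?_).trans_le (hle _ (by positivity))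
  filter_upwards [ae_nonneg_subordinator a] with t ht
  rw [lintegral_enorm_fourier_gaborAtom_mul (by positivity), norm_smul, mul_pow,
    Real.norm_of_nonneg (by positivity)]
  congr 3
  field_simp

end BesselKernel

section Multiplier

variable {V F : Type*} [NormedAddCommGroup V] [InnerProductSpace ℝ V] [FiniteDimensional ℝ V]
  [MeasurableSpace V] [BorelSpace V] [NormedAddCommGroup F] [InnerProductSpace ℂ F]

theorem integrable_mul_gaborAtom_sub {c : ℝ} (hc : 0 < c) {m : V → ℂ} (hm : MemLp m ⊤)
    (x ξ : V) : Integrable fun η => m η * gaborAtom c x (ξ - η) :=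
  ((integrable_gaborAtom hc x).comp_sub_left ξ).mul_of_top_right hm

theorem smul_gabor_smul_fourier_eq_integral [CompleteSpace F] {b : ℝ} (hb : 0 < b) {m : V → ℂ}
    (hm : MemLp m ⊤) {h : V → F} (hh : Integrable h) (x ξ : V) :
    (((π / b) ^ (dim V / 2 : ℝ) : ℝ) : ℂ) • gabor (2 * (π ^ 2 / b)) (fun η => m η • 𝓕 h η) ξ x =
      ∫ y, 𝓕 (fun η => m η * gaborAtom (π ^ 2 / b) x (ξ - η)) y • gabor b h y ξ := by
  rw [integral_fourier_smul_eq_integral_smul_fourier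
    (integrable_mul_gaborAtom_sub (by positivity) hm x ξ) (integrable_gabor hb hh ξ), gabor,
    ← integral_smul]
  congr 1 with η
  rw [fourier_gabor hb hh, fourier_gaborAtom hb, two_mul (π ^ 2 / b), ← add_zero x,
    ← gaborAtom_mul_gaborAtom, add_zero]
  simp only [smul_smul]
  ring_nf

theorem enorm_fourier_mul_gaborAtom_sub (c : ℝ) (m : V → ℂ) (x ξ y : V) :
    ‖𝓕 (fun η => m η * gaborAtom c x (ξ - η)) y‖ₑ =
      ‖𝓕 (fun η => m η * gaborAtom c 0 (ξ - η)) (x + y)‖ₑ := by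
  have hphase : 𝓕 (fun η => m η * gaborAtom c x (ξ - η)) y =
      Real.fourierChar ⟪x, ξ⟫ • 𝓕 (fun η => m η * gaborAtom c 0 (ξ - η)) (x + y) := by
    rw [Real.fourier_eq, Real.fourier_eq, Circle.smul_def (Real.fourierChar ⟪x, ξ⟫),
      ← integral_smul]
    congr 1 with η
    rw [← Circle.smul_def]
    rw [gaborAtom_sub_right, inner_add_right, neg_add, AddChar.map_add_eq_mul]
    simp only [mul_smul, mul_smul_comm, smul_comm (Real.fourierChar (-⟪η, y⟫))]
  rw [hphase, ← ofReal_norm, Circle.norm_smul, ofReal_norm]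

theorem enorm_smul_gabor_smul_fourier_le [CompleteSpace F] {b : ℝ} (hb : 0 < b) {m : V → ℂ}
    (hm : MemLp m ⊤) {h : V → F} (hh : Integrable h) (x ξ : V) :
    ‖(((π / b) ^ (dim V / 2 : ℝ) : ℝ) : ℂ)‖ₑ *
        ‖gabor (2 * (π ^ 2 / b)) (fun η => m η • 𝓕 h η) ξ x‖ₑ ≤
      ∫⁻ y, ‖gabor b h (-y) ξ‖ₑ *
        ‖𝓕 (fun η => m η * gaborAtom (π ^ 2 / b) 0 (ξ - η)) (x - y)‖ₑ := by
  rw [← enorm_smul, smul_gabor_smul_fourier_eq_integral hb hm hh, ← integral_neg_eq_self]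
  refine (enorm_integral_le_lintegral_enorm _).trans_eq (lintegral_congr fun y => ?_)
  rw [enorm_smul, enorm_fourier_mul_gaborAtom_sub, ← sub_eq_add_neg, mul_comm]

theorem lintegral_enorm_gabor_smul_fourier_rpow_le [CompleteSpace F] {b p : ℝ} (hb : 0 < b)
    (hp : 1 < p) {m : V → ℂ} (hm : MemLp m ⊤) {h : V → F} (hh : Integrable h) (ξ : V) :
    ‖(((π / b) ^ (dim V / 2 : ℝ) : ℝ) : ℂ)‖ₑ ^ p *
        ∫⁻ x, ‖gabor (2 * (π ^ 2 / b)) (fun η => m η • 𝓕 h η) ξ x‖ₑ ^ p ≤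
      (∫⁻ y, ‖𝓕 (fun η => m η * gaborAtom (π ^ 2 / b) 0 (ξ - η)) y‖ₑ) ^ p *
        ∫⁻ y, ‖gabor b h y ξ‖ₑ ^ p := by
  have hgabor : Measurable fun y => ‖gabor b h (-y) ξ‖ₑ :=
    ((stronglyMeasurable_uncurry_gabor b hh.1).enorm.comp measurable_prodMk_right).comp
      measurable_neg
  have hfour : Measurable (‖𝓕 (fun η => m η * gaborAtom (π ^ 2 / b) 0 (ξ - η)) ·‖ₑ) :=
    (continuous_fourier
      (integrable_mul_gaborAtom_sub (by positivity) hm 0 ξ)).stronglyMeasurable.enorm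
  rw [← lintegral_const_mul' _ _ (by finiteness)]
  calc _ ≤ ∫⁻ x, (∫⁻ y, ‖gabor b h (-y) ξ‖ₑ *
        ‖𝓕 (fun η => m η * gaborAtom (π ^ 2 / b) 0 (ξ - η)) (x - y)‖ₑ) ^ p := by
        gcongr with x
        rw [← ENNReal.mul_rpow_of_nonneg _ _ (by linarith)]
        gcongr
        exact enorm_smul_gabor_smul_fourier_le hb hm hh x ξ
    _ ≤ _ := lintegral_lintegral_mul_sub_rpow_le hp hgabor hfour
    _ = _ := by rw [lintegral_neg_eq_self (fun y => ‖gabor b h y ξ‖ₑ ^ p)]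

end Multiplier

section Bessel

variable {V F : Type*} [NormedAddCommGroup V] [InnerProductSpace ℝ V] [FiniteDimensional ℝ V]
  [MeasurableSpace V] [BorelSpace V] [NormedAddCommGroup F] [InnerProductSpace ℂ F]
  [CompleteSpace F]

theorem memLp_top_besselSymbol {a : ℝ} (ha : 0 ≤ a) :
    MemLp (besselSymbol a) ⊤ (volume : Measure V) :=
  memLp_top_of_bound (continuous_besselSymbol a).aestronglyMeasurable 1
    (.of_forall (norm_besselSymbol_le_one ha))

theorem exists_lintegral_enorm_gabor_besselSymbol_rpow_le {a b p : ℝ} (ha : 0 ≤ a) (hb : 0 < b)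
    (hp : 1 < p) : ∃ C ≠ (⊤ : ℝ≥0∞), ∀ h : V → F, Integrable h → ∀ ξ,
      ∫⁻ x, ‖gabor (2 * (π ^ 2 / b)) (fun η => besselSymbol a η • 𝓕 h η) ξ x‖ₑ ^ p ≤
        C * ‖besselSymbol a ξ‖ₑ ^ p * ∫⁻ y, ‖gabor b h y ξ‖ₑ ^ p := by
  obtain ⟨C, hC, hle⟩ := exists_lintegral_enorm_fourier_besselSymbol_mul_gaborAtom_le (V := V) ha
    (by positivity : 0 < π ^ 2 / b)
  have hp₀ : 0 ≤ p := by linarith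
  set κ : ℂ := (((π / b) ^ (dim V / 2 : ℝ) : ℝ) : ℂ)
  have hκ : ‖κ‖ₑ ^ p ≠ 0 := by
    simp [κ, (by positivity : (π / b) ^ (dim V / 2 : ℝ) ≠ 0), hp₀.not_gt]
  refine ⟨(‖κ‖ₑ ^ p)⁻¹ * C ^ p, by finiteness, fun h hh ξ => ?_⟩
  rw [mul_assoc, mul_assoc, ← ENNReal.mul_le_iff_le_inv hκ (by finiteness), ← mul_assoc,
    ← ENNReal.mul_rpow_of_nonneg _ _ hp₀]
  refine (lintegral_enorm_gabor_smul_fourier_rpow_le hb hp (memLp_top_besselSymbol ha) hh ξ).trans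
    ?_
  gcongr
  exact hle ξ

theorem exists_lintegral_gabor_besselSymbol_rpow_mul_enorm_rpow_le {a b p s : ℝ} (ha : 0 ≤ a)
    (hb : 0 < b) (hp : 1 < p) (hs : 0 ≤ s) (hsap : s ≤ 2 * a * p) :
    ∃ C ≠ (⊤ : ℝ≥0∞), ∀ h : V → F, Integrable h →
      ∫⁻ ξ, (∫⁻ x, ‖gabor (2 * (π ^ 2 / b)) (fun η => besselSymbol a η • 𝓕 h η) ξ x‖ₑ ^ p) *
          ‖ξ‖ₑ ^ s ≤ C * ∫⁻ ξ, ∫⁻ y, ‖gabor b h y ξ‖ₑ ^ p := by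
  obtain ⟨C, hC, hgabor⟩ :=
    exists_lintegral_enorm_gabor_besselSymbol_rpow_le (V := V) (F := F) ha hb hp
  refine ⟨C, hC, fun h hh => ?_⟩
  rw [← lintegral_const_mul' _ _ hC]
  refine lintegral_mono fun ξ => ?_
  calc _ ≤ C * ‖besselSymbol a ξ‖ₑ ^ p * (∫⁻ y, ‖gabor b h y ξ‖ₑ ^ p) * ‖ξ‖ₑ ^ s := by
        gcongr
        exact hgabor h hh ξ
    _ = C * (∫⁻ y, ‖gabor b h y ξ‖ₑ ^ p) * (‖ξ‖ₑ ^ s * ‖besselSymbol a ξ‖ₑ ^ p) := by ring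
    _ ≤ _ := mul_le_of_le_one_right'
        (enorm_rpow_mul_enorm_besselSymbol_rpow_le_one (by linarith) hs hsap ξ)

theorem exists_lintegral_enorm_fourier_besselSymbol_smul_fourier_rpow_le [Nontrivial V]
    {a b p : ℝ} (hb : 0 < b) (hp : 2 ≤ p) (hap : dim V * (p - 2) ≤ 2 * a * p) :
    ∃ C ≠ (⊤ : ℝ≥0∞), ∀ h : V → F, Integrable h → Integrable (𝓕 h) →
      ∫⁻ y, ‖𝓕 (fun η => besselSymbol a η • 𝓕 h η) y‖ₑ ^ p ≤
        C * ∫⁻ ξ, ∫⁻ y, ‖gabor b h y ξ‖ₑ ^ p := by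
  have hdim : 0 ≤ dim V * (p - 2) := mul_nonneg (Nat.cast_nonneg _) (by linarith)
  have ha : 0 ≤ a := by
    by_contra! ha
    nlinarith
  obtain ⟨C, hC, hgabor⟩ := exists_lintegral_gabor_besselSymbol_rpow_mul_enorm_rpow_le (V := V)
    (F := F) ha hb (by linarith) hdim hap
  obtain ⟨D, hD, hfour⟩ := exists_lintegral_enorm_fourier_rpow_le_gabor (V := V) (F := F)
    (by positivity : 0 < 2 * (π ^ 2 / b)) hp
  refine ⟨D * C, by finiteness, fun h hh hF => ?_⟩
  set g : V → F := fun η => besselSymbol a η • 𝓕 h η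
  have hg : Integrable g := hF.smul_of_top_right (memLp_top_besselSymbol ha)
  have hmeas : Measurable fun z : V × V =>
      ‖gabor (2 * (π ^ 2 / b)) g z.2 z.1‖ₑ ^ p * ‖z.2‖ₑ ^ (dim V * (p - 2)) := by
    have := (stronglyMeasurable_uncurry_gabor (2 * (π ^ 2 / b)) hg.1).enorm.comp measurable_swap
    exact (this.pow_const p).mul (by fun_prop)
  calc ∫⁻ y, ‖𝓕 g y‖ₑ ^ p
      ≤ D * ∫⁻ x, ∫⁻ ξ, ‖gabor (2 * (π ^ 2 / b)) g ξ x‖ₑ ^ p * ‖ξ‖ₑ ^ (dim V * (p - 2)) :=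
        hfour g hg
    _ = D * ∫⁻ ξ, (∫⁻ x, ‖gabor (2 * (π ^ 2 / b)) g ξ x‖ₑ ^ p) * ‖ξ‖ₑ ^ (dim V * (p - 2)) := by
        rw [lintegral_lintegral_swap hmeas.aemeasurable]
        congr with ξ
        exact lintegral_mul_const' _ _ (ENNReal.rpow_ne_top_of_nonneg hdim enorm_ne_top)
    _ ≤ D * C * ∫⁻ ξ, ∫⁻ y, ‖gabor b h y ξ‖ₑ ^ p := by
        rw [mul_assoc]
        exact mul_le_mul_right (hgabor h hh) D

end Bessel

section ModulationSpace

variable {d : ℕ}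

theorem FT_eq_fourier (f : E d → ℂ) (ξ : E d) : FT d f ξ = 𝓕 f ((2 * π)⁻¹ • ξ) := by
  rw [FT, Real.fourier_eq']
  refine integral_congr_ae (.of_forall fun x => ?_)
  simp only [real_inner_smul_right, smul_eq_mul]
  push_cast
  congr 2
  field_simp

theorem integrable_FT_iff {f : E d → ℂ} : Integrable (FT d f) ↔ Integrable (𝓕 f) := by
  rw [funext (FT_eq_fourier f)]
  exact integrable_comp_smul_iff _ _ (by positivity)

theorem bessel_neg_eq_fourier (k : ℝ) (f : E d → ℂ) (x : E d) :
    bessel d (-k) f x = 𝓕 (fun η => besselSymbol (k / 2) η • 𝓕 f η) (-x) := by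
  set φ : E d → ℂ := fun η =>
    cexp (((-2 * π * ⟪η, -x⟫ : ℝ) : ℂ) * I) • besselSymbol (k / 2) η • 𝓕 f η
  have hφ (ξ : E d) : cexp (I * (⟪x, ξ⟫ : ℂ)) * (((1 + ‖ξ‖ ^ 2) ^ (-k / 2) : ℝ) : ℂ) * FT d f ξ =
      φ ((2 * π)⁻¹ • ξ) := by
    have hphase : -2 * π * ⟪(2 * π)⁻¹ • ξ, -x⟫ = ⟪x, ξ⟫ := by
      rw [inner_neg_right, real_inner_smul_left, real_inner_comm]
      field_simp
    rw [FT_eq_fourier, mul_assoc, mul_comm I, ← hphase, neg_div]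
    simp only [φ, besselSymbol, smul_inv_smul₀ two_pi_pos.ne', smul_eq_mul]
  rw [bessel, Real.fourier_eq']
  simp only [hφ]
  rw [Measure.integral_comp_smul_of_nonneg _ _ _ (hR := by positivity), finrank_euclideanSpace_fin,
    inv_pow, inv_inv, Complex.real_smul, inv_mul_cancel_left₀]
  exact Complex.ofReal_ne_zero.2 (by positivity)

theorem continuous_bessel_neg {k : ℝ} (hk : 0 ≤ k) {f : E d → ℂ} (hF : Integrable (𝓕 f)) :
    Continuous (bessel d (-k) f) := by
  rw [funext (bessel_neg_eq_fourier k f)]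
  exact (continuous_fourier (hF.smul_of_top_right
    (memLp_top_besselSymbol (by positivity)))).comp continuous_neg

theorem stft_eq_smul_gabor (f : E d → ℂ) (z : P d) :
    stft d f z = Real.fourierChar (-⟪z.1, (2 * π)⁻¹ • z.2⟫) •
      gabor (1 / 2) f z.1 ((2 * π)⁻¹ • z.2) := by
  rw [Circle.smul_def, gabor, ← integral_smul, stft]
  congr 1 with y
  rw [pkbar, gaborAtom, Real.fourierChar_apply, smul_eq_mul, smul_eq_mul, Complex.ofReal_exp,
    ← Complex.exp_add, ← mul_assoc, ← Complex.exp_add, mul_comm, norm_sub_rev, inner_sub_right]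
  simp only [real_inner_smul_left, real_inner_smul_right, real_inner_comm z.2]
  push_cast
  congr 2
  field_simp
  ring

theorem stronglyMeasurable_stft {f : E d → ℂ} (hf : AEStronglyMeasurable f) :
    StronglyMeasurable (stft d f) := by
  have hchar : Measurable fun z : P d => (Real.fourierChar (-⟪z.1, (2 * π)⁻¹ • z.2⟫) : ℂ) := by
    fun_prop
  have hscale : Measurable fun z : P d => (z.1, (2 * π)⁻¹ • z.2) := by fun_prop
  have hgabor := (stronglyMeasurable_uncurry_gabor (1 / 2 : ℝ) hf).comp_measurable hscale
  simp only [Function.comp_def, Function.uncurry] at hgabor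
  simp only [funext (stft_eq_smul_gabor f), Circle.smul_def]
  exact hchar.stronglyMeasurable.smul hgabor

theorem lintegral_enorm_stft_rpow {f : E d → ℂ} (hf : AEStronglyMeasurable f) (p : ℝ) :
    ∫⁻ z : P d, ‖stft d f z‖ₑ ^ p =
      ENNReal.ofReal ((2 * π) ^ d) * ∫⁻ ξ, ∫⁻ x, ‖gabor (1 / 2) f x ξ‖ₑ ^ p := by
  have henorm (z : P d) : ‖stft d f z‖ₑ = ‖gabor (1 / 2) f z.1 ((2 * π)⁻¹ • z.2)‖ₑ := by
    rw [stft_eq_smul_gabor, ← ofReal_norm, Circle.norm_smul, ofReal_norm]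
  rw [Measure.volume_eq_prod,
    lintegral_prod_symm _ ((stronglyMeasurable_stft hf).enorm.pow_const p).aemeasurable]
  simp only [henorm]
  rw [lintegral_comp_smul volume (fun ξ => ∫⁻ x, ‖gabor (1 / 2) f x ξ‖ₑ ^ p) (by positivity),
    finrank_euclideanSpace_fin, inv_pow, inv_inv, abs_of_nonneg (by positivity)]

theorem exists_lintegral_enorm_bessel_rpow_le (hd : 1 ≤ d) {p k : ℝ} (hp : 2 ≤ p)
    (hk : d * (p - 2) ≤ k * p) : ∃ C ≠ (⊤ : ℝ≥0∞), ∀ f : E d → ℂ, Integrable f →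
      Integrable (𝓕 f) →
        ∫⁻ x, ‖bessel d (-k) f x‖ₑ ^ p ≤ C * ∫⁻ z : P d, ‖stft d f z‖ₑ ^ p := by
  have : Nonempty (Fin d) := ⟨⟨0, hd⟩⟩
  obtain ⟨C, hC, hle⟩ := exists_lintegral_enorm_fourier_besselSymbol_smul_fourier_rpow_le
    (V := E d) (F := ℂ) (a := k / 2) one_half_pos hp
    (by rw [finrank_euclideanSpace_fin]; linarith)
  refine ⟨C, hC, fun f hf hF => ?_⟩
  simp only [bessel_neg_eq_fourier]
  rw [lintegral_neg_eq_self (fun y => ‖𝓕 (fun η => besselSymbol (k / 2) η • 𝓕 f η) y‖ₑ ^ p),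
    lintegral_enorm_stft_rpow hf.1]
  refine (hle f hf hF).trans (mul_le_mul_right (le_mul_of_one_le_left' ?_) C)
  exact ENNReal.one_le_ofReal.2 (one_le_pow₀ (by linarith [pi_gt_three]))

theorem lintegral_enorm_stft_rpow_lt_top {p : ℝ} (hp : 2 ≤ p) {f : E d → ℂ} (hf : Integrable f)
    (hF : Integrable (𝓕 f)) : ∫⁻ z : P d, ‖stft d f z‖ₑ ^ p < ⊤ := by
  rw [lintegral_enorm_stft_rpow hf.1]
  exact ENNReal.mul_lt_top ENNReal.ofReal_lt_top
    (lintegral_enorm_gabor_rpow_lt_top one_half_pos hp hf hF)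

end ModulationSpace

theorem stmt8_general (d : ℕ) (hd : 1 ≤ d) (p : ℝ) (hp : 2 ≤ p)
    (k : ℝ) (hk : 2 * d * (1 / 2 - 1 / p) ≤ k) :
    ∃ C > (0 : ℝ), ∀ f : E d → ℂ, Integrable f → Integrable (FT d f) →
      (∫ x : E d, ‖bessel d (-k) f x‖ ^ p) ^ (1 / p) ≤
        C * (∫ z : P d, ‖stft d f z‖ ^ p) ^ (1 / p) := by
  have hp₀ : 0 < p := by linarith
  have hkp : d * (p - 2) ≤ k * p := by
    calc d * (p - 2) = 2 * d * (1 / 2 - 1 / p) * p := by field_simp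
      _ ≤ k * p := by gcongr
  have hk₀ : 0 ≤ k :=
    nonneg_of_mul_nonneg_left ((mul_nonneg (Nat.cast_nonneg d) (by linarith)).trans hkp) hp₀
  obtain ⟨C, hC, hle⟩ := exists_lintegral_enorm_bessel_rpow_le hd hp hkp
  refine ⟨(C.toReal + 1) ^ (1 / p), by positivity, fun f hf hFT => ?_⟩
  have hF := integrable_FT_iff.1 hFT
  have hu := (continuous_bessel_neg hk₀ hF).aestronglyMeasurable (μ := volume)
  have hW := (stronglyMeasurable_stft hf.1).aestronglyMeasurable (μ := volume)
  have hW_top := (lintegral_enorm_stft_rpow_lt_top hp hf hF).ne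
  rw [← Real.mul_rpow (by positivity) (by positivity),
    integral_norm_rpow_eq_toReal_lintegral hu hp₀.le,
    integral_norm_rpow_eq_toReal_lintegral hW hp₀.le]
  gcongr
  calc _ ≤ C.toReal * (∫⁻ z : P d, ‖stft d f z‖ₑ ^ p).toReal := by
        rw [← ENNReal.toReal_mul]
        exact ENNReal.toReal_mono (by finiteness) (hle f hf hF)
    _ ≤ _ := by gcongr; linarith

/-- the embedding `M^p ↪ L^p_{-k}` for `2 ≤ p < ∞`, `k = 2d(1/2 - 1/p)`:
`‖(1-Δ)^{-k/2} f‖_{L^p(ℝ^d)} ≤ C·‖V_g f‖_{L^p(ℝ^{2d})}` for Schwartz `f`. -/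
theorem stmt8 (d : ℕ) (hd : 1 ≤ d) (p : ℝ) (hp : 2 ≤ p)
    (k : ℝ) (hk : k = 2 * d * (1 / 2 - 1 / p)) :
    ∃ C > (0 : ℝ), ∀ f : SchwartzMap (E d) ℂ,
      (∫ x : E d, ‖bessel d (-k) (⇑f) x‖ ^ p) ^ (1 / p) ≤
        C * (∫ z : P d, ‖stft d (⇑f) z‖ ^ p) ^ (1 / p) := by
  obtain ⟨C, hC, hle⟩ := stmt8_general d hd p hp k hk.ge
  exact ⟨C, hC, fun f => hle f f.integrable (integrable_FT_iff.2 (𝓕 f).integrable)⟩
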